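/- There is a constant A > 0 depending only on q such that the following holds for every odd integer q ≥ 3, every integer n ≥ 2, and all δ, ε ∈ (0,1): if E : {±1}^k → {±1}^n is a (q,δ,ε)-normally decodable code, then k ≤ A · n^{1−2/q} · (log n)^4 · ε^{−4} · δ^{−2}. -/

import Mathlib

open Finset

/-!
The bound is obtained by the Kikuchi matrix method. For a random message `b`, the value of a clause
`(i, C)`, namely `b i * ∏ v ∈ C, E b v`, has expectation at least `2 ε`.

The clauses are grouped greedily, at dyadic scales, so that those of a group share a center of `t`
code coordinates and no set of coordinates has a codegree much larger than the groups. If `d` is the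
size of a group, the second moment of the sum of its values is of order `ε ^ 2 * d ^ 2`, most of
which comes from pairs of distinct clauses. In the product of two such clauses the code bits at the
center cancel, leaving two message bits times a monomial of degree `2 (q - t)` in the code bits; a
random cut decouples the two message bits.

Each of these monomials is a quadratic form in the signs of the vertices of a Kikuchi graph, whose
vertices are `(q - t)`-tuples of words of length `l ≈ n ^ (1 - 2 / q)` in the code coordinates.
After the edges with an end of large degree are deleted, the moment method bounds the expected norm
of the random signed sum of the adjacency matrices by `√(k log (number of vertices))` times the
maximal degree, so by about `√(k l log n)` times it. Comparing this with the lower bound gives the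
theorem.
-/

open scoped BigOperators

/-! ### Rademacher sums -/

section Expectation

lemma expect_prod_eq_prod_expect {κ ω : Type*} [Fintype κ] [DecidableEq κ] [Fintype ω]
    (F : κ → ω → ℝ) : 𝔼 b : κ → ω, ∏ i, F i (b i) = ∏ i, 𝔼 u, F i u := by
  simp only [Fintype.expect_eq_sum_div_card, prod_div_distrib, prod_univ_sum,
    Fintype.piFinset_univ, Fintype.card_fun, prod_const, card_univ, Nat.cast_pow]

lemma pow_expect_le_expect_pow_of_even {ω : Type*} [Fintype ω] [Nonempty ω] (f : ω → ℝ) {p : ℕ}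
    (hp : Even p) : (𝔼 b, f b) ^ p ≤ 𝔼 b, f b ^ p := by
  have h := Real.pow_arith_mean_le_arith_mean_pow_of_even univ
    (fun _ : ω => (Fintype.card ω : ℝ)⁻¹) f (fun _ _ => by positivity) (by simp) hp
  simpa only [Fintype.expect_eq_sum_div_card, div_eq_inv_mul, mul_sum] using h

lemma expect_piecewise {κ : Type*} [Fintype κ] [DecidableEq κ] {ω : Type*} [Fintype ω]
    [Nonempty ω] (I : Finset κ) (F : (κ → ω) → ℝ) :
    𝔼 c : κ → ω, 𝔼 b : κ → ω, F (I.piecewise b c) = 𝔼 b, F b := by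
  have hswap : Function.Involutive
      fun x : (κ → ω) × (κ → ω) => (I.piecewise x.1 x.2, I.piecewise x.2 x.1) := fun x => by
    ext i <;> by_cases hi : i ∈ I <;> simp [hi]
  rw [← expect_product', univ_product_univ, Fintype.expect_bijective _ hswap.bijective _
    (fun x => F x.2) fun _ => rfl, ← univ_product_univ, expect_product]
  exact Fintype.expect_const (𝔼 b, F b)

end Expectation

/-- The real value of a sign, as a monoid homomorphism. -/
noncomputable def sgn : ℤˣ →* ℝ := (Int.castRingHom ℝ : ℤ →* ℝ).comp (Units.coeHom ℤ)

@[simp]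
lemma sgn_neg_one : sgn (-1) = -1 := by simp [sgn]

@[simp]
lemma sgn_mul_self (u : ℤˣ) : sgn u * sgn u = 1 := by
  rw [← map_mul, Int.units_mul_self, map_one]

@[simp]
lemma abs_sgn (u : ℤˣ) : |sgn u| = 1 := by
  rcases Int.units_eq_one_or u with rfl | rfl <;> simp

lemma expect_units_int (F : ℤˣ → ℝ) : 𝔼 u, F u = (F 1 + F (-1)) / 2 := by
  have huniv : (univ : Finset ℤˣ) = {1, -1} := by decide
  rw [Fintype.expect_eq_sum_div_card, huniv, sum_pair (by decide)]
  simp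

section Rademacher

variable {κ : Type*} [Fintype κ] [DecidableEq κ]

lemma expect_exp_rademacher_le {c : κ → ℝ} (hc : ∀ i, |c i| ≤ 1) (t : ℝ) :
    𝔼 b : κ → ℤˣ, Real.exp (t * ∑ i, c i * sgn (b i))
      ≤ Real.exp (Fintype.card κ * (t ^ 2 / 2)) := by
  simp_rw [mul_sum, Real.exp_sum]
  rw [expect_prod_eq_prod_expect fun i u => Real.exp (t * (c i * sgn u)), Real.exp_nat_mul,
    ← card_univ, ← prod_const]
  refine prod_le_prod (fun i _ => expect_nonneg fun u _ => (Real.exp_pos _).le) fun i _ => ?_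
  have hci : (t * c i) ^ 2 ≤ t ^ 2 := by
    rw [mul_pow]
    exact mul_le_of_le_one_right (sq_nonneg t) ((sq_le_one_iff_abs_le_one _).2 (hc i))
  calc 𝔼 u, Real.exp (t * (c i * sgn u)) = Real.cosh (t * c i) := by
        rw [expect_units_int, Real.cosh_eq]
        simp
    _ ≤ Real.exp ((t * c i) ^ 2 / 2) := Real.cosh_le_exp_half_sq _
    _ ≤ Real.exp (t ^ 2 / 2) := by gcongr

lemma pow_two_mul_le_factorial_mul_cosh (x : ℝ) (m : ℕ) :
    x ^ (2 * m) ≤ (2 * m).factorial * Real.cosh x := by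
  rw [← div_le_iff₀' (by positivity)]
  exact le_hasSum (Real.hasSum_cosh x) m fun j _ => by
    rw [pow_mul]; positivity

lemma expect_rademacher_pow_le {c : κ → ℝ} (hc : ∀ i, |c i| ≤ 1) (m : ℕ) :
    𝔼 b : κ → ℤˣ, (∑ i, c i * sgn (b i)) ^ (2 * m)
      ≤ (Real.exp 1 * (2 * m) * Fintype.card κ) ^ m := by
  obtain rfl | hm := Nat.eq_zero_or_pos m
  · simp
  obtain hk | hk := Nat.eq_zero_or_pos (Fintype.card κ)
  · have := Fintype.card_eq_zero_iff.1 hk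
    simp [hm.ne']
  set S : (κ → ℤˣ) → ℝ := fun b => ∑ i, c i * sgn (b i)
  -- This `t` minimises `exp (t² k / 2) / t ^ (2 m)`.
  set t : ℝ := √(2 * m / Fintype.card κ)
  have ht_sq : t ^ 2 = 2 * m / Fintype.card κ := Real.sq_sqrt (by positivity)
  have ht : 0 < t := Real.sqrt_pos.2 (by positivity)
  have hexp : ∀ s, s ^ 2 = t ^ 2 → 𝔼 b, Real.exp (s * S b) ≤ Real.exp 1 ^ m := fun s hs => by
    refine (expect_exp_rademacher_le hc s).trans_eq ?_
    rw [hs, ht_sq, ← Real.exp_nat_mul]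
    congr 1
    field_simp
  have hcosh : 𝔼 b, Real.cosh (t * S b) ≤ Real.exp 1 ^ m := by
    simp_rw [Real.cosh_eq, ← expect_div, expect_add_distrib, ← neg_mul]
    linarith [hexp t rfl, hexp (-t) (neg_sq t)]
  have hfact : ((2 * m).factorial : ℝ) ≤ (2 * m) ^ (2 * m) := by
    exact_mod_cast Nat.factorial_le_pow (2 * m)
  calc 𝔼 b, S b ^ (2 * m)
      ≤ 𝔼 b, (2 * m).factorial * Real.cosh (t * S b) / t ^ (2 * m) := by
        refine expect_le_expect fun b _ => (le_div_iff₀ (by positivity)).2 ?_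
        rw [mul_comm, ← mul_pow]
        exact pow_two_mul_le_factorial_mul_cosh _ m
    _ = (2 * m).factorial * 𝔼 b, Real.cosh (t * S b) / t ^ (2 * m) := by
        simp_rw [mul_div_assoc, ← mul_expect]
    _ ≤ (2 * m) ^ (2 * m) * (Real.exp 1 ^ m / t ^ (2 * m)) := by
        rw [← expect_div]; gcongr
    _ = (Real.exp 1 * (2 * m) * Fintype.card κ) ^ m := by
        rw [pow_mul, pow_mul, ht_sq, ← div_pow, ← mul_pow]
        congr 1
        field_simp

end Rademacher

/-! ### The trace method -/

section TraceMethod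

open Matrix

variable {V κ : Type*} [Fintype V] [Fintype κ] [DecidableEq κ]

section

variable [DecidableEq V]

lemma exists_forall_pow_eq_mul_diagonal_mul_transpose {B : Matrix V V ℝ} (hB : B.IsSymm) :
    ∃ (U : Matrix V V ℝ) (d : V → ℝ), Uᵀ * U = 1 ∧ ∀ r, B ^ r = U * diagonal (d ^ r) * Uᵀ := by
  have hH : B.IsHermitian := by rwa [Matrix.IsHermitian, conjTranspose_eq_transpose_of_trivial]
  refine ⟨hH.eigenvectorUnitary, hH.eigenvalues, ?_, fun r => ?_⟩ <;>
    rw [← conjTranspose_eq_transpose_of_trivial, ← star_eq_conjTranspose]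
  · exact Unitary.coe_star_mul_self _
  · conv_lhs => rw [hH.spectral_theorem, ← map_pow, diagonal_pow]
    rfl

lemma dotProduct_mulVec_pow_le [Nonempty V] {B : Matrix V V ℝ} (hB : B.IsSymm) (z : V → ℝ)
    (m : ℕ) : (z ⬝ᵥ B *ᵥ z) ^ (2 * m) ≤ (z ⬝ᵥ z) ^ (2 * m) * (B ^ (2 * m)).trace := by
  obtain ⟨U, d, hU, hpow⟩ := exists_forall_pow_eq_mul_diagonal_mul_transpose hB
  have hquad : ∀ r, z ⬝ᵥ (B ^ r) *ᵥ z = ∑ i, (Uᵀ *ᵥ z) i ^ 2 * d i ^ r := fun r => by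
    rw [hpow, ← mulVec_mulVec, ← mulVec_mulVec, dotProduct_mulVec, ← mulVec_transpose]
    exact sum_congr rfl fun i _ => by rw [mulVec_diagonal, Pi.pow_apply]; ring
  have htrace : (B ^ (2 * m)).trace = ∑ i, d i ^ (2 * m) := by
    rw [hpow, trace_mul_cycle, hU, one_mul, trace_diagonal]
    rfl
  have hnorm : ∑ i, (Uᵀ *ᵥ z) i ^ 2 = z ⬝ᵥ z := by simpa using (hquad 0).symm
  obtain ⟨i₀, hi₀⟩ := Finite.exists_max fun i => |d i|
  have habs : |z ⬝ᵥ B *ᵥ z| ≤ z ⬝ᵥ z * |d i₀| := by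
    rw [← pow_one B, hquad, ← hnorm, sum_mul]
    refine (abs_sum_le_sum_abs _ _).trans (sum_le_sum fun i _ => ?_)
    rw [pow_one, abs_mul, abs_sq]
    exact mul_le_mul_of_nonneg_left (hi₀ i) (sq_nonneg _)
  calc (z ⬝ᵥ B *ᵥ z) ^ (2 * m) = |z ⬝ᵥ B *ᵥ z| ^ (2 * m) := ((even_two_mul m).pow_abs _).symm
    _ ≤ (z ⬝ᵥ z * |d i₀|) ^ (2 * m) := pow_le_pow_left₀ (abs_nonneg _) habs _
    _ = (z ⬝ᵥ z) ^ (2 * m) * d i₀ ^ (2 * m) := by rw [mul_pow, (even_two_mul m).pow_abs]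
    _ ≤ (z ⬝ᵥ z) ^ (2 * m) * (B ^ (2 * m)).trace := by
        rw [htrace]
        exact mul_le_mul_of_nonneg_left
          (single_le_sum (f := fun i => d i ^ (2 * m))
            (fun i _ => (even_two_mul m).pow_nonneg _) (mem_univ i₀))
          ((even_two_mul m).pow_nonneg _)

lemma expect_monomial_nonneg (e : κ → ℕ) : 0 ≤ 𝔼 b : κ → ℤˣ, ∏ i, sgn (b i) ^ e i := by
  rw [expect_prod_eq_prod_expect fun i u => sgn u ^ e i]
  refine prod_nonneg fun i _ => ?_
  rw [expect_units_int, map_one, sgn_neg_one, one_pow]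
  rcases neg_one_pow_eq_or ℝ (e i) with h | h <;> rw [h] <;> norm_num

lemma sgn_mul_monomial (e : κ → ℕ) (j : κ) (b : κ → ℤˣ) :
    sgn (b j) * ∏ i, sgn (b i) ^ e i = ∏ i, sgn (b i) ^ (e + Pi.single j 1 : κ → ℕ) i := by
  simp only [Pi.add_apply, pow_add, prod_mul_distrib, Pi.single_apply, pow_ite, pow_one, pow_zero,
    prod_ite_eq', mem_univ, if_true]
  exact mul_comm _ _

lemma expect_monomial_mul_pow_succ_apply (M : κ → Matrix V V ℝ) (L : ℕ) (e : κ → ℕ) (u v : V) :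
    𝔼 b : κ → ℤˣ, (∏ i, sgn (b i) ^ e i) * ((∑ i, sgn (b i) • M i) ^ (L + 1)) u v
      = ∑ j, ∑ w, M j w v * 𝔼 b : κ → ℤˣ, (∏ i, sgn (b i) ^ (e + Pi.single j 1 : κ → ℕ) i) *
          ((∑ i, sgn (b i) • M i) ^ L) u w := by
  simp_rw [mul_expect, ← expect_sum_comm, ← sgn_mul_monomial, pow_succ, Matrix.mul_apply,
    Matrix.sum_apply, Matrix.smul_apply, smul_eq_mul, mul_sum]
  refine expect_congr rfl fun b _ => ?_
  rw [sum_comm]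
  exact sum_congr rfl fun j _ => sum_congr rfl fun w _ => by ring

-- The moments of the matrix Rademacher sum are compared entrywise with those of the scalar one;
-- the induction on `L` peels off one factor, which multiplies the monomial by one more sign.
lemma sum_abs_expect_monomial_mul_pow_apply_le {M : κ → Matrix V V ℝ} {D : κ → ℝ}
    (hM : ∀ i u, ∑ v, |M i u v| ≤ D i) (L : ℕ) (e : κ → ℕ) (u : V) :
    ∑ v, |𝔼 b : κ → ℤˣ, (∏ i, sgn (b i) ^ e i) * ((∑ i, sgn (b i) • M i) ^ L) u v|
      ≤ 𝔼 b : κ → ℤˣ, (∏ i, sgn (b i) ^ e i) * (∑ i, D i * sgn (b i)) ^ L := by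
  induction L generalizing e with
  | zero =>
    simp only [pow_zero, mul_one, Matrix.one_apply, mul_ite, mul_zero]
    rw [sum_eq_single u (fun v _ hv => by simp [hv.symm]) (by simp)]
    simp [abs_of_nonneg (expect_monomial_nonneg e)]
  | succ L ih =>
    set A : κ → V → ℝ := fun j w => 𝔼 b : κ → ℤˣ,
      (∏ i, sgn (b i) ^ (e + Pi.single j 1 : κ → ℕ) i) * ((∑ i, sgn (b i) • M i) ^ L) u w
    calc ∑ v, |𝔼 b : κ → ℤˣ, (∏ i, sgn (b i) ^ e i) * ((∑ i, sgn (b i) • M i) ^ (L + 1)) u v|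
        = ∑ v, |∑ j, ∑ w, M j w v * A j w| := by simp_rw [expect_monomial_mul_pow_succ_apply, A]
      _ ≤ ∑ v, ∑ j, ∑ w, |M j w v| * |A j w| := by
          refine sum_le_sum fun v _ => (abs_sum_le_sum_abs _ _).trans <| sum_le_sum fun j _ =>
            (abs_sum_le_sum_abs _ _).trans <| sum_le_sum fun w _ => (abs_mul _ _).le
      _ = ∑ j, ∑ w, (∑ v, |M j w v|) * |A j w| := by
          simp_rw [sum_mul]
          rw [sum_comm]
          exact sum_congr rfl fun j _ => sum_comm
      _ ≤ ∑ j, ∑ w, D j * |A j w| := by gcongr with j _ w; exact hM j w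
      _ ≤ ∑ j, D j * 𝔼 b : κ → ℤˣ, (∏ i, sgn (b i) ^ (e + Pi.single j 1 : κ → ℕ) i) *
            (∑ i, D i * sgn (b i)) ^ L := by
          refine sum_le_sum fun j _ => ?_
          rw [← mul_sum]
          exact mul_le_mul_of_nonneg_left (ih _)
            ((sum_nonneg fun v _ => abs_nonneg _).trans (hM j u))
      _ = 𝔼 b : κ → ℤˣ, (∏ i, sgn (b i) ^ e i) * (∑ i, D i * sgn (b i)) ^ (L + 1) := by
          simp_rw [← sgn_mul_monomial, mul_expect, ← expect_sum_comm, pow_succ', sum_mul, mul_sum]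
          exact expect_congr rfl fun b _ => sum_congr rfl fun j _ => by ring

lemma expect_trace_pow_le {M : κ → Matrix V V ℝ} {D : κ → ℝ}
    (hM : ∀ i u, ∑ v, |M i u v| ≤ D i) (L : ℕ) :
    𝔼 b : κ → ℤˣ, ((∑ i, sgn (b i) • M i) ^ L).trace
      ≤ Fintype.card V * 𝔼 b : κ → ℤˣ, (∑ i, D i * sgn (b i)) ^ L := by
  have hrow := sum_abs_expect_monomial_mul_pow_apply_le hM L 0
  simp only [Pi.zero_apply, pow_zero, prod_const_one, one_mul] at hrow
  simp only [Matrix.trace, Matrix.diag_apply, expect_sum_comm]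
  rw [← nsmul_eq_mul, ← card_univ, ← sum_const]
  exact sum_le_sum fun u _ => (le_abs_self _).trans <|
    (single_le_sum (f := fun v => |𝔼 b : κ → ℤˣ, ((∑ i, sgn (b i) • M i) ^ L) u v|)
      (fun v _ => abs_nonneg _) (mem_univ u)).trans (hrow u)

end

lemma expect_dotProduct_mulVec_pow_le [Nonempty V] {M : κ → Matrix V V ℝ}
    (hsymm : ∀ i, (M i).IsSymm) {D : ℝ} (hM : ∀ i u, ∑ v, |M i u v| ≤ D)
    {z : (κ → ℤˣ) → V → ℝ} (hz : ∀ b u, z b u * z b u = 1) (m : ℕ) :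
    (𝔼 b, z b ⬝ᵥ (∑ i, sgn (b i) • M i) *ᵥ z b) ^ (2 * m)
      ≤ Fintype.card V *
        (Fintype.card V * D) ^ (2 * m) * (Real.exp 1 * (2 * m) * Fintype.card κ) ^ m := by
  classical
  have hB : ∀ b : κ → ℤˣ, (∑ i, sgn (b i) • M i).IsSymm := fun b => by
    simp only [Matrix.IsSymm, transpose_sum, transpose_smul, (hsymm _).eq]
  have hzz : ∀ b, z b ⬝ᵥ z b = Fintype.card V := fun b => by simp [dotProduct, hz]
  calc (𝔼 b, z b ⬝ᵥ (∑ i, sgn (b i) • M i) *ᵥ z b) ^ (2 * m)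
      ≤ 𝔼 b, (z b ⬝ᵥ (∑ i, sgn (b i) • M i) *ᵥ z b) ^ (2 * m) :=
        pow_expect_le_expect_pow_of_even _ (even_two_mul m)
    _ ≤ 𝔼 b : κ → ℤˣ,
          (Fintype.card V : ℝ) ^ (2 * m) * ((∑ i, sgn (b i) • M i) ^ (2 * m)).trace :=
        expect_le_expect fun b _ => by
          simpa only [hzz] using dotProduct_mulVec_pow_le (hB b) (z b) m
    _ ≤ (Fintype.card V : ℝ) ^ (2 * m) *
          (Fintype.card V * 𝔼 b : κ → ℤˣ, (∑ i, D * sgn (b i)) ^ (2 * m)) := by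
        rw [← mul_expect]
        gcongr
        exact expect_trace_pow_le hM (2 * m)
    _ = Fintype.card V * (Fintype.card V * D) ^ (2 * m) *
          𝔼 b : κ → ℤˣ, (∑ i, 1 * sgn (b i)) ^ (2 * m) := by
        simp_rw [one_mul, ← mul_sum, mul_pow, ← mul_expect]
        ring
    _ ≤ _ := by
        exact mul_le_mul_of_nonneg_left (expect_rademacher_pow_le (fun _ => abs_one.le) m)
          (mul_nonneg (Nat.cast_nonneg _) ((even_two_mul m).pow_nonneg _))

-- Taking `2 m`-th roots turns the factor `card V` into `e`.
lemma expect_dotProduct_mulVec_le [Nonempty V] {M : κ → Matrix V V ℝ}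
    (hsymm : ∀ i, (M i).IsSymm) {D : ℝ} (hD : 0 ≤ D)
    (hM : ∀ i u, ∑ v, |M i u v| ≤ D)
    {z : (κ → ℤˣ) → V → ℝ} (hz : ∀ b u, z b u * z b u = 1) {m : ℕ} (hm : m ≠ 0)
    (hcard : (Fintype.card V : ℝ) ≤ Real.exp 1 ^ (2 * m)) :
    𝔼 b, z b ⬝ᵥ (∑ i, sgn (b i) • M i) *ᵥ z b
      ≤ Real.exp 1 * (Fintype.card V * D) * √(Real.exp 1 * (2 * m) * Fintype.card κ) := by
  refine le_of_pow_le_pow_left₀ (mul_ne_zero two_ne_zero hm) (by positivity) ?_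
  calc (𝔼 b, z b ⬝ᵥ (∑ i, sgn (b i) • M i) *ᵥ z b) ^ (2 * m)
      ≤ Fintype.card V *
          (Fintype.card V * D) ^ (2 * m) * (Real.exp 1 * (2 * m) * Fintype.card κ) ^ m :=
        expect_dotProduct_mulVec_pow_le hsymm hM hz m
    _ ≤ Real.exp 1 ^ (2 * m) *
          (Fintype.card V * D) ^ (2 * m) * (Real.exp 1 * (2 * m) * Fintype.card κ) ^ m := by
        gcongr
    _ = _ := by
        rw [mul_pow _ √_, pow_mul √_, Real.sq_sqrt (by positivity), mul_pow (Real.exp 1)]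

end TraceMethod

section ColouredGraph

variable {V κ ι Edge : Type*} [DecidableEq V] [DecidableEq κ] [Fintype ι]

/-- The number of edge ends of colour `i` at the vertex `u`, in a multigraph with end points `src`
and `tgt` whose edges are grouped into the families `R p`, all edges of `R p` having
colour `c p`. -/
def colourDegree (c : ι → κ) (src tgt : Edge → V) (R : ι → Finset Edge) (i : κ) (u : V) : ℕ :=
  ∑ p with c p = i, (#{e ∈ R p | src e = u} + #{e ∈ R p | tgt e = u})

/-- The edges of `R p` both of whose ends have degree at most `D` in their colour. -/
noncomputable def lowDegreeEdges (c : ι → κ) (src tgt : Edge → V) (R : ι → Finset Edge) (D : ℝ)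
    (p : ι) : Finset Edge :=
  {e ∈ R p | (colourDegree c src tgt R (c p) (src e) : ℝ) ≤ D ∧
    (colourDegree c src tgt R (c p) (tgt e) : ℝ) ≤ D}

lemma colourDegree_lowDegreeEdges_le (c : ι → κ) (src tgt : Edge → V) (R : ι → Finset Edge)
    {D : ℝ} (hD : 0 ≤ D) (i : κ) (u : V) :
    (colourDegree c src tgt (lowDegreeEdges c src tgt R D) i u : ℝ) ≤ D := by
  by_cases hu : (colourDegree c src tgt R i u : ℝ) ≤ D
  · refine le_trans ?_ hu
    unfold colourDegree lowDegreeEdges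
    gcongr <;> exact filter_subset _ _
  · suffices colourDegree c src tgt (lowDegreeEdges c src tgt R D) i u = 0 by simpa [this]
    refine sum_eq_zero fun p hp => ?_
    obtain rfl := (mem_filter.1 hp).2
    simp only [Nat.add_eq_zero_iff, card_eq_zero, filter_eq_empty_iff, lowDegreeEdges, mem_filter]
    constructor <;> rintro e ⟨-, hsrc, htgt⟩ rfl
    exacts [hu hsrc, hu htgt]

lemma card_le_two_mul_card_lowDegreeEdges {c : ι → κ} {src tgt : Edge → V} {R : ι → Finset Edge}
    {D : ℝ} (hD : 0 < D) {p : ι}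
    (hR : ∑ e ∈ R p, (colourDegree c src tgt R (c p) (src e) +
      colourDegree c src tgt R (c p) (tgt e) : ℝ) ≤ D / 2 * #(R p)) :
    (#(R p) : ℝ) ≤ 2 * #(lowDegreeEdges c src tgt R D p) := by
  set deg : V → ℝ := fun u => colourDegree c src tgt R (c p) u
  have hmarkov : D * (#(R p) - #(lowDegreeEdges c src tgt R D p)) ≤ D / 2 * #(R p) := by
    refine le_trans ?_ hR
    rw [lowDegreeEdges, ← card_filter_add_card_filter_not (s := R p)
      fun e => deg (src e) ≤ D ∧ deg (tgt e) ≤ D, Nat.cast_add, add_sub_cancel_left, mul_comm,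
      ← nsmul_eq_mul, ← sum_const, sum_filter]
    refine sum_le_sum fun e _ => ?_
    have hsrc : 0 ≤ deg (src e) := Nat.cast_nonneg _
    have htgt : 0 ≤ deg (tgt e) := Nat.cast_nonneg _
    change _ ≤ deg (src e) + deg (tgt e)
    split_ifs with h
    · positivity
    · rcases not_and_or.1 h with h | h <;> linarith
  nlinarith

open Matrix in
/-- The adjacency matrix of the undirected multigraph with edge set `S`. -/
def edgeMatrix (src tgt : Edge → V) (S : Finset Edge) : Matrix V V ℝ :=
  ∑ e ∈ S, (single (src e) (tgt e) 1 + single (tgt e) (src e) 1)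

lemma edgeMatrix_isSymm (src tgt : Edge → V) (S : Finset Edge) :
    (edgeMatrix src tgt S).IsSymm := by
  simp only [edgeMatrix, Matrix.IsSymm, Matrix.transpose_sum, Matrix.transpose_add,
    Matrix.transpose_single, add_comm]

variable [Fintype V]

lemma sum_abs_edgeMatrix (src tgt : Edge → V) (S : Finset Edge) (u : V) :
    ∑ v, |edgeMatrix src tgt S u v| = #{e ∈ S | src e = u} + #{e ∈ S | tgt e = u} := by
  have hnonneg : ∀ v, 0 ≤ edgeMatrix src tgt S u v := fun v => by
    simp only [edgeMatrix, Matrix.sum_apply, Matrix.add_apply, Matrix.single_apply]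
    positivity
  simp_rw [fun v => abs_of_nonneg (hnonneg v)]
  simp only [edgeMatrix, Matrix.sum_apply, Matrix.add_apply,
    Matrix.single_apply]
  rw [sum_comm]
  simp [sum_add_distrib, ite_and]

open Matrix in
lemma dotProduct_mulVec_single_one (z : V → ℝ) (u v : V) :
    z ⬝ᵥ single u v (1 : ℝ) *ᵥ z = z u * z v := by
  simp [dotProduct, mulVec, single_apply, ite_and]

open Matrix in
lemma dotProduct_edgeMatrix_mulVec {src tgt : Edge → V} {S : Finset Edge} {z : V → ℝ} {f : ℝ}
    (hf : ∀ e ∈ S, z (src e) * z (tgt e) = f) :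
    z ⬝ᵥ edgeMatrix src tgt S *ᵥ z = 2 * #S * f := by
  simp only [edgeMatrix, sum_mulVec, dotProduct_sum, add_mulVec, dotProduct_add,
    dotProduct_mulVec_single_one]
  rw [sum_congr rfl fun e he => by rw [mul_comm (z (tgt e)), hf e he], sum_const, nsmul_eq_mul]
  ring

/-- The coefficient matrix of the sign of colour `i`: the sum of the adjacency matrices of the edge
sets `S p` of this colour, with the weights `s p` divided by `2 * #(S p)` because the quadratic form
of an adjacency matrix counts every edge twice. -/
noncomputable def colourMatrix (c : ι → κ) (src tgt : Edge → V) (S : ι → Finset Edge) (s : ι → ℝ)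
    (i : κ) : Matrix V V ℝ :=
  ∑ p with c p = i, (s p / (2 * #(S p))) • edgeMatrix src tgt (S p)

variable {c : ι → κ} {src tgt : Edge → V} {S : ι → Finset Edge} {D K : ℝ} {s : ι → ℝ}

omit [Fintype V] in
lemma colourMatrix_isSymm (i : κ) : (colourMatrix c src tgt S s i).IsSymm := by
  simp only [colourMatrix, Matrix.IsSymm, Matrix.transpose_sum, Matrix.transpose_smul,
    (edgeMatrix_isSymm ..).eq]

lemma sum_abs_colourMatrix_le (hD : ∀ i u, (colourDegree c src tgt S i u : ℝ) ≤ D)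
    (hK : 0 < K) (hS : ∀ p, K ≤ #(S p)) (hs : ∀ p, |s p| ≤ 1) (i : κ) (u : V) :
    ∑ v, |colourMatrix c src tgt S s i u v| ≤ D / (2 * K) := by
  calc ∑ v, |colourMatrix c src tgt S s i u v|
      ≤ ∑ v, ∑ p with c p = i, |s p / (2 * #(S p)) * edgeMatrix src tgt (S p) u v| := by
        gcongr with v
        simp only [colourMatrix, Matrix.sum_apply, Matrix.smul_apply, smul_eq_mul]
        exact abs_sum_le_sum_abs _ _
    _ = ∑ p with c p = i, |s p| / (2 * #(S p)) *
          (#{e ∈ S p | src e = u} + #{e ∈ S p | tgt e = u}) := by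
        simp only [abs_mul, abs_div, Nat.abs_cast, abs_two]
        rw [sum_comm]
        simp only [← mul_sum, sum_abs_edgeMatrix]
    _ ≤ ∑ p with c p = i, 1 / (2 * K) *
          (#{e ∈ S p | src e = u} + #{e ∈ S p | tgt e = u}) := by
        gcongr with p
        exacts [hs p, hS p]
    _ ≤ D / (2 * K) := by
        have hdeg := hD i u
        rw [colourDegree] at hdeg
        push_cast at hdeg
        rw [← mul_sum, one_div_mul_eq_div]
        gcongr

variable [Fintype κ]

open Matrix in
lemma dotProduct_sum_sgn_smul_colourMatrix_mulVec (hS : ∀ p, (S p).Nonempty) {z : V → ℝ}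
    {f : ι → ℝ} (hf : ∀ p, ∀ e ∈ S p, z (src e) * z (tgt e) = f p) (b : κ → ℤˣ) :
    z ⬝ᵥ (∑ i, sgn (b i) • colourMatrix c src tgt S s i) *ᵥ z
      = ∑ p, s p * sgn (b (c p)) * f p := by
  simp only [colourMatrix, sum_mulVec, dotProduct_sum, smul_mulVec, dotProduct_smul, smul_eq_mul,
    dotProduct_edgeMatrix_mulVec (hf _), mul_sum]
  rw [← sum_fiberwise univ c]
  refine sum_congr rfl fun i _ => sum_congr rfl fun p hp => ?_
  have hcard : (#(S p) : ℝ) ≠ 0 := Nat.cast_ne_zero.2 (hS p).card_ne_zero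
  rw [(mem_filter.1 hp).2]
  field_simp

lemma expect_sum_sgn_mul_le_of_colourDegree_le [Nonempty V]
    (hD : ∀ i u, (colourDegree c src tgt S i u : ℝ) ≤ D) (hD₀ : 0 ≤ D) (hK : 0 < K)
    (hS : ∀ p, K ≤ #(S p)) (hs : ∀ p, |s p| ≤ 1)
    {z : (κ → ℤˣ) → V → ℝ} (hz : ∀ b u, z b u * z b u = 1) {f : (κ → ℤˣ) → ι → ℝ}
    (hf : ∀ b p, ∀ e ∈ S p, z b (src e) * z b (tgt e) = f b p) {m : ℕ} (hm : m ≠ 0)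
    (hcard : (Fintype.card V : ℝ) ≤ Real.exp 1 ^ (2 * m)) :
    𝔼 b, ∑ p, s p * sgn (b (c p)) * f b p
      ≤ Real.exp 1 * (Fintype.card V * (D / (2 * K))) *
          √(Real.exp 1 * (2 * m) * Fintype.card κ) := by
  have hne : ∀ p, (S p).Nonempty := fun p =>
    card_pos.1 (Nat.cast_pos.1 (hK.trans_le (hS p)))
  simp_rw [← fun b => dotProduct_sum_sgn_smul_colourMatrix_mulVec (s := s) (c := c) hne (hf b) b]
  exact expect_dotProduct_mulVec_le colourMatrix_isSymm (by positivity)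
    (sum_abs_colourMatrix_le hD hK hS hs) hz hm hcard

lemma expect_sum_sgn_mul_le_of_sum_colourDegree_le [Nonempty V]
    {R : ι → Finset Edge} (hD : 0 < D) (hK : 0 < K) (hR : ∀ p, K ≤ #(R p))
    (hdeg : ∀ p, ∑ e ∈ R p, (colourDegree c src tgt R (c p) (src e) +
      colourDegree c src tgt R (c p) (tgt e) : ℝ) ≤ D / 2 * #(R p))
    (hs : ∀ p, |s p| ≤ 1) {z : (κ → ℤˣ) → V → ℝ} (hz : ∀ b u, z b u * z b u = 1)
    {f : (κ → ℤˣ) → ι → ℝ}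
    (hf : ∀ b p, ∀ e ∈ R p, z b (src e) * z b (tgt e) = f b p) {m : ℕ} (hm : m ≠ 0)
    (hcard : (Fintype.card V : ℝ) ≤ Real.exp 1 ^ (2 * m)) :
    𝔼 b, ∑ p, s p * sgn (b (c p)) * f b p
      ≤ Real.exp 1 * (Fintype.card V * (D / K)) * √(Real.exp 1 * (2 * m) * Fintype.card κ) := by
  have hlow : ∀ p, K / 2 ≤ #(lowDegreeEdges c src tgt R D p) := fun p => by
    linarith [hR p, card_le_two_mul_card_lowDegreeEdges hD (hdeg p)]
  have := expect_sum_sgn_mul_le_of_colourDegree_le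
    (colourDegree_lowDegreeEdges_le c src tgt R hD.le) hD.le (half_pos hK) hlow hs hz
    (fun b p e he => hf b p e (mem_filter.1 he).1) hm hcard
  rwa [mul_div_cancel₀ K two_ne_zero] at this

end ColouredGraph

/-! ### Kikuchi graphs -/

section Kikuchi

variable {α β ν : Type*} [DecidableEq α] [DecidableEq β] [DecidableEq ν]

/-- The symbols of the Kikuchi vertex `v` (an `α`-tuple of words in `ν`, with positions `β`) at the
positions chosen by `φ`. -/
def readAt (φ : α → β) (v : α → β → ν) : α → ν := fun a => v a (φ a)

/-- The Kikuchi vertex `v` with the symbols at the positions chosen by `φ` replaced by `y`. -/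
def writeAt (φ : α → β) (y : α → ν) (v : α → β → ν) : α → β → ν :=
  fun a => Function.update (v a) (φ a) (y a)

omit [DecidableEq α] [DecidableEq ν] in
lemma readAt_writeAt (φ : α → β) (y : α → ν) (v : α → β → ν) : readAt φ (writeAt φ y v) = y := by
  ext a
  simp [readAt, writeAt]

omit [DecidableEq α] [DecidableEq ν] in
lemma writeAt_writeAt_readAt (φ : α → β) (y : α → ν) (v : α → β → ν) :
    writeAt φ (readAt φ v) (writeAt φ y v) = v := by
  ext a j
  simp [readAt, writeAt]

variable [Fintype α] [Fintype β] [Fintype ν]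

/-- The directed edges of the Kikuchi graph of the constraint `(x, y)`: pairs of vertices differing
by the replacement of a copy of `x` by a copy of `y` at the positions `φ`, which are recorded
as the first component. -/
def kikuchiEdges (x y : α → ν) : Finset ((α → β) × (α → β → ν) × (α → β → ν)) :=
  {e | readAt e.1 e.2.1 = x ∧ e.2.2 = writeAt e.1 y e.2.1}

lemma sum_kikuchiEdges_source {M : Type*} [AddCommMonoid M] (x y : α → ν)
    (F : (α → β → ν) → M) :
    ∑ e ∈ kikuchiEdges x y, F e.2.1 = ∑ φ, ∑ u with readAt φ u = x, F u := by
  rw [sum_sigma']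
  exact sum_nbij' (fun e => ⟨e.1, e.2.1⟩) (fun s => (s.1, s.2, writeAt s.1 y s.2))
    (by simp +contextual [kikuchiEdges]) (by simp [kikuchiEdges])
    (by simp +contextual [kikuchiEdges]) (by simp) (by simp)

lemma sum_kikuchiEdges_target {M : Type*} [AddCommMonoid M] (x y : α → ν)
    (F : (α → β → ν) → M) :
    ∑ e ∈ kikuchiEdges x y, F e.2.2 = ∑ φ, ∑ u with readAt φ u = y, F u := by
  rw [← sum_kikuchiEdges_source y x]
  have hswap : ∀ x y : α → ν, ∀ e ∈ kikuchiEdges (β := β) x y,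
      (e.1, e.2.2, e.2.1) ∈ kikuchiEdges y x := by
    simp only [kikuchiEdges, mem_filter, mem_univ, true_and]
    rintro _ y e ⟨rfl, he⟩
    rw [he, readAt_writeAt, writeAt_writeAt_readAt]
    trivial
  exact sum_nbij' (fun e => (e.1, e.2.2, e.2.1)) (fun e => (e.1, e.2.2, e.2.1))
    (hswap x y) (hswap y x) (by simp) (by simp) (by simp)

lemma colourDegree_kikuchiEdges {ι κ : Type*} [Fintype ι] [DecidableEq κ] (c : ι → κ)
    (x y : ι → α → ν) (i : κ) (u : α → β → ν) :
    colourDegree c (fun e => e.2.1) (fun e => e.2.2) (fun p => kikuchiEdges (x p) (y p)) i u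
      = ∑ p with c p = i, (#{φ : α → β | readAt φ u = x p} + #{φ : α → β | readAt φ u = y p}) := by
  refine sum_congr rfl fun p _ => ?_
  simp only [card_filter]
  rw [sum_kikuchiEdges_source _ _ fun w => if w = u then 1 else 0,
    sum_kikuchiEdges_target _ _ fun w => if w = u then 1 else 0]
  simp [sum_ite_eq']

omit [Fintype α] [DecidableEq α] in
lemma expect_ite_forall_mem_eq [Nonempty ν] (s : Finset β) (y : β → ν) :
    𝔼 f : β → ν, (if ∀ j ∈ s, f j = y j then (1 : ℝ) else 0) = (Fintype.card ν : ℝ)⁻¹ ^ #s := by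
  have hone : ∀ y : ν, 𝔼 u, (if u = y then (1 : ℝ) else 0) = (Fintype.card ν : ℝ)⁻¹ := fun y => by
    rw [Fintype.expect_eq_sum_div_card, sum_ite_eq', if_pos (mem_univ y), one_div]
  calc 𝔼 f : β → ν, (if ∀ j ∈ s, f j = y j then (1 : ℝ) else 0)
      = 𝔼 f : β → ν, ∏ j, if j ∈ s then (if f j = y j then (1 : ℝ) else 0) else 1 := by
        simp only [prod_ite_mem, univ_inter, prod_ite_zero, prod_const_one]
    _ = ∏ j, if j ∈ s then (Fintype.card ν : ℝ)⁻¹ else 1 := by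
        rw [expect_prod_eq_prod_expect fun j u =>
          if j ∈ s then (if u = y j then (1 : ℝ) else 0) else 1]
        refine prod_congr rfl fun j _ => ?_
        split_ifs
        exacts [hone _, Fintype.expect_const _]
    _ = (Fintype.card ν : ℝ)⁻¹ ^ #s := by simp

/-- The product over the coordinates of `θ`, increased by `1` where `x` and `y` agree. With `θ` the
expected number of occurrences of a symbol in a random word, it bounds the expected number of
copies of `x` in a random Kikuchi vertex containing a given copy of `y`. -/
noncomputable def agreementWeight (θ : ℝ) (x y : α → ν) : ℝ :=
  ∏ a, ((if x a = y a then 1 else 0) + θ)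

omit [DecidableEq α] [Fintype ν] in
lemma agreementWeight_nonneg {θ : ℝ} (hθ : 0 ≤ θ) (x y : α → ν) : 0 ≤ agreementWeight θ x y :=
  prod_nonneg fun _ _ => by positivity

omit [Fintype α] [DecidableEq α] in
lemma expect_ite_mul_card_le [Nonempty ν] (j : β) (y y' : ν) :
    𝔼 f : β → ν, (if f j = y then (1 : ℝ) else 0) * #{j' | f j' = y'}
      ≤ (Fintype.card ν : ℝ)⁻¹ *
        ((if y' = y then 1 else 0) + Fintype.card β / Fintype.card ν) := by
  have hpair : ∀ j', 𝔼 f : β → ν, (if f j = y ∧ f j' = y' then (1 : ℝ) else 0)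
      ≤ (if j' = j then (if y' = y then (Fintype.card ν : ℝ)⁻¹ else 0) else 0) +
        (Fintype.card ν : ℝ)⁻¹ ^ 2 := fun j' => by
    obtain rfl | hj := eq_or_ne j' j
    · rw [if_pos rfl]
      split_ifs with hy
      · have := expect_ite_forall_mem_eq {j'} fun _ => y
        simp only [mem_singleton, forall_eq, card_singleton, pow_one] at this
        simp only [hy, and_self, this]
        exact le_add_of_nonneg_right (by positivity)
      · rw [expect_congr rfl fun f _ => if_neg fun h => hy (h.2.symm.trans h.1), expect_const_zero]
        positivity
    · have := expect_ite_forall_mem_eq {j, j'} (Function.update (fun _ => y') j y)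
      simp only [mem_insert, mem_singleton, forall_eq_or_imp, forall_eq, Function.update_self,
        Function.update_of_ne hj, card_pair hj.symm] at this
      rw [this, if_neg hj, zero_add]
  calc 𝔼 f : β → ν, (if f j = y then (1 : ℝ) else 0) * #{j' | f j' = y'}
      = ∑ j', 𝔼 f : β → ν, if f j = y ∧ f j' = y' then (1 : ℝ) else 0 := by
        simp only [card_filter, Nat.cast_sum, mul_sum, expect_sum_comm, ite_and,
          Nat.cast_ite, Nat.cast_one, Nat.cast_zero, ite_mul, one_mul, zero_mul]
    _ ≤ _ := sum_le_sum fun j' _ => hpair j'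
    _ = _ := by
        rw [sum_add_distrib, sum_ite_eq', if_pos (mem_univ j), sum_const, card_univ, nsmul_eq_mul]
        split_ifs <;> ring

omit [DecidableEq α] [Fintype β] [DecidableEq β] [Fintype ν] in
lemma ite_readAt_eq (φ : α → β) (v : α → β → ν) (y : α → ν) :
    (if readAt φ v = y then (1 : ℝ) else 0) = ∏ a, if v a (φ a) = y a then (1 : ℝ) else 0 := by
  simp [prod_ite_zero, funext_iff, readAt]

lemma card_filter_readAt_eq [Nonempty ν] (φ : α → β) (y : α → ν) :
    (#{v | readAt φ v = y} : ℝ)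
      = Fintype.card (α → β → ν) * (Fintype.card ν : ℝ)⁻¹ ^ Fintype.card α := by
  have hone : ∀ a, 𝔼 f : β → ν, (if f (φ a) = y a then (1 : ℝ) else 0) = (Fintype.card ν : ℝ)⁻¹ :=
    fun a => by simpa using expect_ite_forall_mem_eq {φ a} fun _ => y a
  calc (#{v | readAt φ v = y} : ℝ)
      = Fintype.card (α → β → ν) *
          𝔼 v : α → β → ν, ∏ a, if v a (φ a) = y a then (1 : ℝ) else 0 := by
        rw [Fintype.card_mul_expect, card_filter, Nat.cast_sum]
        simp_rw [← ite_readAt_eq, Nat.cast_ite, Nat.cast_one, Nat.cast_zero]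
    _ = _ := by
        rw [expect_prod_eq_prod_expect fun a (f : β → ν) => if f (φ a) = y a then (1 : ℝ) else 0]
        simp [hone]

lemma sum_card_filter_readAt_eq_le [Nonempty ν] (φ : α → β) (y y' : α → ν) :
    ∑ v with readAt φ v = y, (#{φ' : α → β | readAt φ' v = y'} : ℝ)
      ≤ Fintype.card (α → β → ν) * (Fintype.card ν : ℝ)⁻¹ ^ Fintype.card α *
        agreementWeight (Fintype.card β / Fintype.card ν) y' y := by
  have hcard : ∀ v : α → β → ν,
      #{φ' : α → β | readAt φ' v = y'} = ∏ a, #{j | v a j = y' a} := fun v => by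
    rw [← Fintype.card_piFinset]
    congr 1
    ext φ'
    simp [Fintype.mem_piFinset, funext_iff, readAt]
  calc ∑ v with readAt φ v = y, (#{φ' : α → β | readAt φ' v = y'} : ℝ)
      = Fintype.card (α → β → ν) * 𝔼 v : α → β → ν,
          ∏ a, ((if v a (φ a) = y a then (1 : ℝ) else 0) * #{j | v a j = y' a}) := by
        rw [Fintype.card_mul_expect, sum_filter]
        refine sum_congr rfl fun v _ => ?_
        rw [prod_mul_distrib, ← ite_readAt_eq, hcard, Nat.cast_prod, ite_mul, one_mul, zero_mul]
    _ = Fintype.card (α → β → ν) *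
          ∏ a, 𝔼 f : β → ν, (if f (φ a) = y a then (1 : ℝ) else 0) * #{j | f j = y' a} := by
        rw [expect_prod_eq_prod_expect fun a (f : β → ν) =>
          (if f (φ a) = y a then (1 : ℝ) else 0) * (#{j | f j = y' a} : ℝ)]
    _ ≤ Fintype.card (α → β → ν) * ∏ a, (Fintype.card ν : ℝ)⁻¹ *
          ((if y' a = y a then 1 else 0) + Fintype.card β / Fintype.card ν) := by
        gcongr with a
        exact expect_ite_mul_card_le _ _ _
    _ = _ := by
        rw [prod_mul_distrib, prod_const, card_univ, mul_assoc, agreementWeight]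

/-- The product of the signs of all symbols of a Kikuchi vertex. -/
noncomputable def vertexSign (g : ν → ℤˣ) (v : α → β → ν) : ℝ := ∏ a, ∏ j, sgn (g (v a j))

omit [DecidableEq α] [DecidableEq β] [DecidableEq ν] [Fintype ν] in
lemma vertexSign_mul_self (g : ν → ℤˣ) (v : α → β → ν) :
    vertexSign g v * vertexSign g v = 1 := by
  simp only [vertexSign, ← prod_mul_distrib, sgn_mul_self, prod_const_one]

omit [DecidableEq α] [DecidableEq ν] [Fintype ν] in
lemma vertexSign_mul_vertexSign_writeAt (g : ν → ℤˣ) (φ : α → β) (y : α → ν) (v : α → β → ν) :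
    vertexSign g v * vertexSign g (writeAt φ y v)
      = ∏ a, sgn (g (readAt φ v a)) * sgn (g (y a)) := by
  simp only [vertexSign, ← prod_mul_distrib]
  refine prod_congr rfl fun a _ => ?_
  rw [prod_eq_single (φ a) (fun j _ hj => by simp [writeAt, hj]) (by simp)]
  simp [writeAt, readAt]

lemma card_kikuchiEdges [Nonempty ν] (x y : α → ν) :
    (#(kikuchiEdges (β := β) x y) : ℝ) = Fintype.card β ^ Fintype.card α *
      (Fintype.card (α → β → ν) * (Fintype.card ν : ℝ)⁻¹ ^ Fintype.card α) := by
  have := sum_kikuchiEdges_source (β := β) x y fun _ => (1 : ℝ)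
  simpa [card_filter_readAt_eq] using this

section Bound

variable {ι κ : Type*} [Fintype ι] [DecidableEq κ] {c : ι → κ} {x y : ι → α → ν} {T : ℝ}
variable [Nonempty ν]

lemma sum_colourDegree_kikuchiEdges_le
    (hx : ∀ i w, ∑ p with c p = i,
      agreementWeight (Fintype.card β / Fintype.card ν) (x p) w ≤ T)
    (hy : ∀ i w, ∑ p with c p = i,
      agreementWeight (Fintype.card β / Fintype.card ν) (y p) w ≤ T)
    (i : κ) (w w' : α → ν) :
    ∑ e ∈ kikuchiEdges w w',
      (colourDegree c (fun e => e.2.1) (fun e => e.2.2)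
          (fun p => kikuchiEdges (β := β) (x p) (y p)) i e.2.1 +
        colourDegree c (fun e => e.2.1) (fun e => e.2.2)
          (fun p => kikuchiEdges (β := β) (x p) (y p)) i e.2.2 : ℝ)
      ≤ 4 * T * #(kikuchiEdges (β := β) w w') := by
  set deg := colourDegree c (fun e => e.2.1) (fun e => e.2.2)
    (fun p => kikuchiEdges (β := β) (x p) (y p)) i with hdeg
  set V : ℝ := Fintype.card (α → β → ν) * (Fintype.card ν : ℝ)⁻¹ ^ Fintype.card α with hV
  have hsum : ∀ (φ : α → β) (w : α → ν), ∑ v with readAt φ v = w, (deg v : ℝ) ≤ V * (2 * T) :=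
    fun φ w => by
    calc ∑ v with readAt φ v = w, (deg v : ℝ)
        = ∑ p with c p = i,
            (∑ v with readAt φ v = w, (#{φ' : α → β | readAt φ' v = x p} : ℝ) +
              ∑ v with readAt φ v = w, (#{φ' : α → β | readAt φ' v = y p} : ℝ)) := by
          simp only [hdeg, colourDegree_kikuchiEdges, Nat.cast_sum, Nat.cast_add]
          rw [sum_comm]
          simp only [sum_add_distrib]
      _ ≤ ∑ p with c p = i,
            (V * agreementWeight (Fintype.card β / Fintype.card ν) (x p) w +
              V * agreementWeight (Fintype.card β / Fintype.card ν) (y p) w) := by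
          gcongr <;> exact sum_card_filter_readAt_eq_le _ _ _
      _ ≤ V * T + V * T := by
          rw [sum_add_distrib, ← mul_sum, ← mul_sum]
          gcongr
          exacts [hx i w, hy i w]
      _ = V * (2 * T) := by ring
  rw [sum_add_distrib, sum_kikuchiEdges_source _ _ fun v => (deg v : ℝ),
    sum_kikuchiEdges_target _ _ fun v => (deg v : ℝ), ← sum_add_distrib, card_kikuchiEdges]
  calc _ ≤ ∑ _φ : α → β, (V * (2 * T) + V * (2 * T)) := by gcongr <;> exact hsum _ _
    _ = _ := by
      simp only [sum_const, card_univ, Fintype.card_fun, nsmul_eq_mul, Nat.cast_pow, hV]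
      ring

lemma expect_sum_sgn_mul_prod_le [Fintype κ] [Nonempty β] (hT : 0 < T)
    (hx : ∀ i w, ∑ p with c p = i,
      agreementWeight (Fintype.card β / Fintype.card ν) (x p) w ≤ T)
    (hy : ∀ i w, ∑ p with c p = i,
      agreementWeight (Fintype.card β / Fintype.card ν) (y p) w ≤ T)
    {s : ι → ℝ} (hs : ∀ p, |s p| ≤ 1) (g : (κ → ℤˣ) → ν → ℤˣ) {m : ℕ} (hm : m ≠ 0)
    (hcard : (Fintype.card (α → β → ν) : ℝ) ≤ Real.exp 1 ^ (2 * m)) :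
    𝔼 b, ∑ p, s p * sgn (b (c p)) * ∏ a, sgn (g b (x p a)) * sgn (g b (y p a))
      ≤ Real.exp 1 * (8 * T / (Fintype.card β / Fintype.card ν : ℝ) ^ Fintype.card α) *
          √(Real.exp 1 * (2 * m) * Fintype.card κ) := by
  have hsign : ∀ b p, ∀ e ∈ kikuchiEdges (β := β) (x p) (y p),
      vertexSign (g b) e.2.1 * vertexSign (g b) e.2.2
        = ∏ a, sgn (g b (x p a)) * sgn (g b (y p a)) := fun b p e he => by
    obtain ⟨hread, hwrite⟩ := (mem_filter.1 he).2
    rw [hwrite, vertexSign_mul_vertexSign_writeAt, hread]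
  convert expect_sum_sgn_mul_le_of_sum_colourDegree_le (mul_pos (by norm_num : (0 : ℝ) < 8) hT)
    (by positivity) (fun p => (card_kikuchiEdges (x p) (y p)).ge) (fun p => ?_) hs
    (fun b u => vertexSign_mul_self (g b) u) hsign hm hcard using 3
  · rw [div_pow, inv_pow]
    field_simp
  · convert sum_colourDegree_kikuchiEdges_le hx hy (c p) (x p) (y p) using 2
    ring

end Bound

end Kikuchi

section Decoupling

variable {ι κ : Type*} [DecidableEq κ]

-- A random cut separates two distinct points in the prescribed order with probability `1 / 4`.
lemma exists_sum_le_four_mul_sum_cut [Finite κ] {S : Finset ι} {c c' : ι → κ}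
    (hne : ∀ p ∈ S, c p ≠ c' p) (F : ι → ℝ) :
    ∃ I : Finset κ, ∑ p ∈ S, F p ≤ 4 * ∑ p ∈ S with c p ∈ I ∧ c' p ∉ I, F p := by
  cases nonempty_fintype κ
  have hcut : ∀ p ∈ S, 𝔼 f : κ → Bool, (if f (c p) = true ∧ f (c' p) = false then F p else 0)
      = F p / 4 := fun p hp => by
    have hprob := expect_ite_forall_mem_eq {c p, c' p} (Function.update (fun _ => false) (c p) true)
    simp only [mem_insert, mem_singleton, forall_eq_or_imp, forall_eq, Function.update_self,
      Function.update_of_ne (hne p hp).symm, card_pair (hne p hp), Fintype.card_bool] at hprob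
    simp_rw [← mul_boole _ (F p), ← mul_expect, hprob]
    norm_num [div_eq_mul_inv]
  have hmean : 𝔼 f : κ → Bool, ∑ p ∈ S, (if f (c p) = true ∧ f (c' p) = false then F p else 0)
      = (∑ p ∈ S, F p) / 4 := by
    rw [expect_sum_comm, sum_congr rfl hcut, sum_div]
  obtain ⟨f, -, hf⟩ := exists_le_of_le_expect univ_nonempty hmean.ge
  refine ⟨univ.filter fun i => f i = true, ?_⟩
  rw [← sum_filter] at hf
  simp only [mem_filter, mem_univ, true_and, Bool.not_eq_true]
  linarith

variable {α β ν : Type*} [Fintype κ] [Fintype α] [DecidableEq α] [Fintype β] [DecidableEq β]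
  [Nonempty β] [Fintype ν] [DecidableEq ν] [Nonempty ν]

-- Once the coordinates of the message outside a cut are frozen, the sign of `c' p` is a coefficient
-- and the sum is linear in the remaining coordinates, up to the arbitrary signs of the code.
lemma expect_sum_sgn_mul_sgn_mul_prod_le {S : Finset ι} {c c' : ι → κ} (hne : ∀ p ∈ S, c p ≠ c' p)
    {x y : ι → α → ν} {T : ℝ} (hT : 0 < T)
    (hx : ∀ i w, ∑ p ∈ S with c p = i,
      agreementWeight (Fintype.card β / Fintype.card ν) (x p) w ≤ T)
    (hy : ∀ i w, ∑ p ∈ S with c p = i,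
      agreementWeight (Fintype.card β / Fintype.card ν) (y p) w ≤ T)
    (E : (κ → ℤˣ) → ν → ℤˣ) {m : ℕ} (hm : m ≠ 0)
    (hcard : (Fintype.card (α → β → ν) : ℝ) ≤ Real.exp 1 ^ (2 * m)) :
    𝔼 b, ∑ p ∈ S, sgn (b (c p)) * sgn (b (c' p)) *
        ∏ a, sgn (E b (x p a)) * sgn (E b (y p a))
      ≤ 4 * (Real.exp 1 * (8 * T / (Fintype.card β / Fintype.card ν : ℝ) ^ Fintype.card α) *
          √(Real.exp 1 * (2 * m) * Fintype.card κ)) := by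
  set F : ι → (κ → ℤˣ) → ℝ := fun p b =>
    sgn (b (c p)) * sgn (b (c' p)) * ∏ a, sgn (E b (x p a)) * sgn (E b (y p a))
  obtain ⟨I, hI⟩ := exists_sum_le_four_mul_sum_cut hne fun p => 𝔼 b, F p b
  set S' := S.filter fun p => c p ∈ I ∧ c' p ∉ I
  have hrestrict : ∀ z : ι → α → ν, (∀ i w, ∑ p ∈ S with c p = i,
      agreementWeight (Fintype.card β / Fintype.card ν) (z p) w ≤ T) → ∀ i w,
      ∑ p : S' with c p.1 = i, agreementWeight (Fintype.card β / Fintype.card ν) (z p) w ≤ T :=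
    fun z hz i w => by
      refine le_trans ?_ (hz i w)
      rw [sum_filter, sum_coe_sort S' fun p =>
        if c p = i then agreementWeight (Fintype.card β / Fintype.card ν) (z p) w else 0,
        ← sum_filter]
      exact sum_le_sum_of_subset_of_nonneg (filter_subset_filter _ (filter_subset _ _))
        fun p _ _ => agreementWeight_nonneg (by positivity) _ _
  have hfreeze : ∀ r b, ∑ p ∈ S', F p (I.piecewise b r)
      = ∑ p : S', sgn (r (c' p)) * sgn (b (c p)) *
        ∏ a, sgn (E (I.piecewise b r) (x p a)) * sgn (E (I.piecewise b r) (y p a)) := fun r b => by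
    rw [← sum_coe_sort]
    refine sum_congr rfl fun p _ => ?_
    obtain ⟨-, hp, hp'⟩ := mem_filter.1 p.2
    simp only [F, piecewise_eq_of_mem _ _ _ hp, piecewise_eq_of_notMem _ _ _ hp',
      mul_comm (sgn (b _))]
  rw [expect_sum_comm]
  refine hI.trans (mul_le_mul_of_nonneg_left ?_ (by norm_num))
  rw [← expect_sum_comm, ← expect_piecewise I]
  refine expect_le univ_nonempty fun r _ => ?_
  simp_rw [hfreeze]
  exact expect_sum_sgn_mul_prod_le hT (hrestrict x hx) (hrestrict y hy)
    (fun p => (abs_sgn _).le) _ hm hcard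

end Decoupling

/-! ### Clauses and their groups -/

section Clause

variable {κ ν : Type*}

/-- The value, `±1`, of the clause `D`, consisting of a message coordinate and a set of code
coordinates: the product of the message bit and the code bits at the clause. It is `1` exactly when
the message bit is decoded correctly. -/
noncomputable def clauseValue (E : (κ → ℤˣ) → ν → ℤˣ) (D : κ × Finset ν) (b : κ → ℤˣ) : ℝ :=
  sgn (b D.1) * ∏ v ∈ D.2, sgn (E b v)

lemma clauseValue_mul_self (E : (κ → ℤˣ) → ν → ℤˣ) (D : κ × Finset ν) (b : κ → ℤˣ) :
    clauseValue E D b * clauseValue E D b = 1 := by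
  rw [clauseValue, ← map_prod, mul_mul_mul_comm, sgn_mul_self, sgn_mul_self, one_mul]

lemma clauseValue_eq_ite (E : (κ → ℤˣ) → ν → ℤˣ) (D : κ × Finset ν) (b : κ → ℤˣ) :
    clauseValue E D b = 2 * (if b D.1 = ∏ v ∈ D.2, E b v then 1 else 0) - 1 := by
  rw [clauseValue, ← map_prod, ← map_mul]
  split_ifs with h
  · rw [h, Int.units_mul_self, map_one]
    norm_num
  · rw [Int.units_ne_iff_eq_neg.1 h, neg_mul, Int.units_mul_self, sgn_neg_one]
    norm_num

variable [Fintype κ] [DecidableEq κ] {E : (κ → ℤˣ) → ν → ℤˣ} {ε : ℝ}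

lemma two_mul_le_expect_clauseValue {D : κ × Finset ν}
    (h : 1 / 2 + ε ≤ (#{b : κ → ℤˣ | b D.1 = ∏ v ∈ D.2, E b v} : ℝ) / 2 ^ Fintype.card κ) :
    2 * ε ≤ 𝔼 b, clauseValue E D b := by
  simp_rw [clauseValue_eq_ite, expect_sub_distrib, ← mul_expect, Fintype.expect_const]
  rw [Fintype.expect_eq_sum_div_card, sum_boole]
  simp only [Fintype.card_fun, Fintype.card_units_int, Nat.cast_pow, Nat.cast_ofNat]
  linarith

-- The second moment of the sum of the values of a large group of clauses exceeds the diagonal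
-- contribution, so that some signal remains on pairs of distinct clauses.
lemma three_mul_sq_le_expect_sum_offDiag {G : Finset (κ × Finset ν)} (hε : 0 ≤ ε)
    (hG : 1 ≤ ε ^ 2 * #G) (hadv : ∀ D ∈ G, 2 * ε ≤ 𝔼 b, clauseValue E D b) :
    3 * (ε ^ 2 * #G ^ 2)
      ≤ 𝔼 b, ∑ p ∈ G.offDiag, clauseValue E p.1 b * clauseValue E p.2 b := by
  classical
  have hsquare : ∀ b, ∑ p ∈ G.offDiag, clauseValue E p.1 b * clauseValue E p.2 b
      = (∑ D ∈ G, clauseValue E D b) ^ 2 - #G := fun b => by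
    rw [sq, sum_mul_sum, ← sum_product', ← diag_union_offDiag,
      sum_union (disjoint_diag_offDiag G), sum_diag]
    simp [clauseValue_mul_self]
  have hmean : 2 * ε * #G ≤ 𝔼 b, ∑ D ∈ G, clauseValue E D b := by
    rw [expect_sum_comm, mul_comm, ← nsmul_eq_mul]
    exact card_nsmul_le_sum _ _ _ hadv
  have hjensen := pow_expect_le_expect_pow_of_even
    (fun b : κ → ℤˣ => ∑ D ∈ G, clauseValue E D b) even_two
  simp_rw [hsquare, expect_sub_distrib, Fintype.expect_const]
  calc 3 * (ε ^ 2 * #G ^ 2) ≤ (2 * ε * #G) ^ 2 - 1 * #G := by nlinarith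
    _ ≤ (𝔼 b, ∑ D ∈ G, clauseValue E D b) ^ 2 - #G := by
      rw [one_mul]
      gcongr
    _ ≤ _ := by gcongr

-- There are only `2 ^ n` sign patterns for the code bits, and the moment of order `2 * n` does not
-- notice the union bound over them.
lemma card_le_of_forall_le_expect_clauseValue [Fintype ν] [Nonempty ν] (hε : 0 < ε)
    (C : κ → Finset ν) (hadv : ∀ i, 2 * ε ≤ 𝔼 b, clauseValue E (i, C i) b) :
    (Fintype.card κ : ℝ) ≤ 3 * Fintype.card ν * ε⁻¹ ^ 2 := by
  classical
  set k := (Fintype.card κ : ℝ) with hk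
  set n := Fintype.card ν with hn
  have hn0 : n ≠ 0 := Fintype.card_ne_zero
  have hmoment : (2 * ε * k) ^ (2 * n) ≤ (2 * (Real.exp 1 * (2 * n) * k)) ^ n := calc
    (2 * ε * k) ^ (2 * n)
      ≤ (𝔼 b, ∑ i, clauseValue E (i, C i) b) ^ (2 * n) := by
        gcongr
        rw [expect_sum_comm, mul_comm, hk, ← card_univ, ← nsmul_eq_mul]
        exact card_nsmul_le_sum _ _ _ fun i _ => hadv i
    _ ≤ 𝔼 b, (∑ i, (∏ v ∈ C i, sgn (E b v)) * sgn (b i)) ^ (2 * n) := by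
        simp only [clauseValue, mul_comm (sgn _)]
        exact pow_expect_le_expect_pow_of_even _ (even_two_mul n)
    _ ≤ 𝔼 b : κ → ℤˣ, ∑ y : ν → ℤˣ, (∑ i, (∏ v ∈ C i, sgn (y v)) * sgn (b i)) ^ (2 * n) := by
        refine expect_le_expect fun b _ => ?_
        exact single_le_sum (f := fun y : ν → ℤˣ =>
          (∑ i, (∏ v ∈ C i, sgn (y v)) * sgn (b i)) ^ (2 * n))
          (fun _ _ => (even_two_mul n).pow_nonneg _) (mem_univ (E b))
    _ ≤ ∑ _y : ν → ℤˣ, (Real.exp 1 * (2 * n) * k) ^ n := by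
        rw [expect_sum_comm]
        refine sum_le_sum fun y _ => expect_rademacher_pow_le (fun i => ?_) n
        rw [← map_prod, abs_sgn]
    _ = (2 * (Real.exp 1 * (2 * n) * k)) ^ n := by
        simp [mul_pow, hn]
  rw [pow_mul] at hmoment
  have hsquare := (pow_le_pow_iff_left₀ (by positivity) (by positivity) hn0).1 hmoment
  obtain hk0 | hk0 := (show 0 ≤ k by positivity).eq_or_lt
  · rw [← hk0]
    positivity
  have hlinear : ε ^ 2 * k ≤ Real.exp 1 * n := by
    refine le_of_mul_le_mul_right ?_ (by positivity : 0 < 4 * k)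
    linarith
  rw [inv_pow, ← div_eq_mul_inv, le_div_iff₀' (by positivity)]
  exact hlinear.trans (by gcongr; exact Real.exp_one_lt_three.le)

end Clause

section Codegree

variable {α V : Type*} [DecidableEq V]

/-- The number of members of `R` whose support contains `P`. -/
def codegree (supp : α → Finset V) (R : Finset α) (P : Finset V) : ℕ := #{D ∈ R | P ⊆ supp D}

lemma card_le_card_mul_of_codegree_singleton_le [Fintype V] {supp : α → Finset V} {R : Finset α}
    {d : ℕ} (hne : ∀ D ∈ R, (supp D).Nonempty) (hdeg : ∀ v, codegree supp R {v} ≤ d) :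
    #R ≤ Fintype.card V * d := by
  classical
  have hcover : R ⊆ univ.biUnion fun v => {D ∈ R | {v} ⊆ supp D} := fun D hD => by
    obtain ⟨v, hv⟩ := hne D hD
    simpa [hD] using ⟨v, hv⟩
  exact (card_le_card hcover).trans (card_biUnion_le_card_mul _ _ _ fun v _ => hdeg v)

/-- A family `𝒢` of pairwise disjoint groups of `d` members of `R`, where the supports of the
members of a group `G` have the `t`-element set `P G`, its center, in common. -/
structure IsGrouping (supp : α → Finset V) (R : Finset α) (d t : ℕ) (𝒢 : Finset (Finset α))
    (P : Finset α → Finset V) : Prop where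
  pairwiseDisjoint : (𝒢 : Set (Finset α)).PairwiseDisjoint id
  subset : ∀ G ∈ 𝒢, G ⊆ R
  card_eq : ∀ G ∈ 𝒢, #G = d
  card_center : ∀ G ∈ 𝒢, #(P G) = t
  center_subset : ∀ G ∈ 𝒢, ∀ D ∈ G, P G ⊆ supp D

variable [DecidableEq α]

lemma exists_pairwiseDisjoint_codegree_sdiff_lt (supp : α → Finset V) {τ : ℕ → ℕ}
    (hτ : ∀ w, τ w ≠ 0) (R : Finset α) :
    ∃ 𝒢 : Finset (Finset α), (𝒢 : Set (Finset α)).PairwiseDisjoint id ∧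
      (∀ G ∈ 𝒢, G ⊆ R ∧ ∃ P : Finset V, P.Nonempty ∧ #G = τ #P ∧ ∀ D ∈ G, P ⊆ supp D) ∧
      ∀ P : Finset V, P.Nonempty → codegree supp (R \ 𝒢.biUnion id) P < τ #P := by
  induction R using Finset.strongInduction with
  | H R ih =>
    by_cases hR : ∀ P : Finset V, P.Nonempty → codegree supp R P < τ #P
    · exact ⟨∅, by simp, by simp, by simpa using hR⟩
    push Not at hR
    obtain ⟨P, hP, hτP⟩ := hR
    obtain ⟨G, hGsub, hGcard⟩ := exists_subset_card_eq hτP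
    have hGR : G ⊆ R := hGsub.trans (filter_subset _ _)
    have hG : G.Nonempty := card_ne_zero.1 (hGcard ▸ hτ _)
    obtain ⟨𝒢, hdisj, hgroup, hdeg⟩ := ih (R \ G) (sdiff_ssubset hGR hG)
    refine ⟨insert G 𝒢, ?_, ?_, ?_⟩
    · rw [coe_insert]
      exact hdisj.insert fun G' hG' _ => disjoint_sdiff.mono_right (hgroup G' hG').1
    · refine (forall_mem_insert _ _ _).2 ⟨⟨hGR, P, hP, hGcard, fun D hD => ?_⟩, fun G' hG' => ?_⟩
      · exact (mem_filter.1 (hGsub hD)).2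
      · exact ⟨(hgroup G' hG').1.trans sdiff_subset, (hgroup G' hG').2⟩
    · rwa [biUnion_insert, id, ← sup_eq_union, ← sdiff_sdiff]

lemma exists_isGrouping_or_exists_codegree_sdiff_lt {supp : α → Finset V} {q : ℕ} {τ : ℕ → ℕ}
    (hτ : ∀ w, τ w ≠ 0) (X : ℝ) {R : Finset α} (hcard : ∀ D ∈ R, #(supp D) = q) :
    (∃ t ∈ Icc 1 q, ∃ 𝒢 P, IsGrouping supp R (τ t) t 𝒢 P ∧ X ≤ #𝒢 * τ t) ∨
      ∃ S ⊆ R, (#S : ℝ) ≤ q * X ∧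
        ∀ P : Finset V, P.Nonempty → codegree supp (R \ S) P < τ #P := by
  obtain ⟨𝒢, hdisj, hgroup, hrest⟩ := exists_pairwiseDisjoint_codegree_sdiff_lt supp hτ R
  choose! hGR P hP hG hPG using hgroup
  set 𝒢t : ℕ → Finset (Finset α) := fun t => {G ∈ 𝒢 | #(P G) = t}
  have hcard_t : ∀ t, ∀ G ∈ 𝒢t t, #G = τ t := fun t G hGt => by
    obtain ⟨hG𝒢, ht⟩ := mem_filter.1 hGt
    rw [hG G hG𝒢, ht]
  by_cases hlevel : ∃ t ∈ Icc 1 q, X ≤ #(𝒢t t) * τ t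
  · obtain ⟨t, ht, hX⟩ := hlevel
    refine Or.inl ⟨t, ht, 𝒢t t, P,
      ⟨hdisj.subset (filter_subset _ _), ?_, hcard_t t, ?_, ?_⟩, hX⟩
    · exact fun G hGt => hGR G (mem_of_mem_filter G hGt)
    · exact fun G hGt => (mem_filter.1 hGt).2
    · exact fun G hGt => hPG G (mem_of_mem_filter G hGt)
  push Not at hlevel
  have hcenter : ∀ G ∈ 𝒢, #(P G) ∈ Icc 1 q := fun G hG𝒢 => by
    obtain ⟨D, hD⟩ : G.Nonempty := card_ne_zero.1 (hG G hG𝒢 ▸ hτ _)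
    rw [mem_Icc, ← hcard D (hGR G hG𝒢 hD)]
    exact ⟨card_pos.2 (hP G hG𝒢), card_le_card (hPG G hG𝒢 D hD)⟩
  refine Or.inr ⟨𝒢.biUnion id, biUnion_subset.2 hGR, ?_, hrest⟩
  calc (#(𝒢.biUnion id) : ℝ) ≤ ∑ G ∈ 𝒢, (#G : ℝ) := mod_cast card_biUnion_le
    _ = ∑ t ∈ Icc 1 q, ∑ G ∈ 𝒢t t, (#G : ℝ) := (sum_fiberwise_of_maps_to hcenter _).symm
    _ = ∑ t ∈ Icc 1 q, (#(𝒢t t) * τ t : ℝ) := sum_congr rfl fun t _ => by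
        rw [sum_congr rfl fun G hGt => congrArg Nat.cast (hcard_t t G hGt), sum_const,
          nsmul_eq_mul]
    _ ≤ ∑ _t ∈ Icc 1 q, X := sum_le_sum fun t ht => (hlevel t ht).le
    _ = q * X := by simp

omit [DecidableEq α] in
-- Dyadic decomposition of the codegrees: removing groups greedily halves the bound on them, and
-- either the groups are numerous at one of the scales or few members are removed altogether.
lemma exists_isGrouping_or_card_le [Fintype V] {supp : α → Finset V} {q : ℕ} (hq : q ≠ 0)
    {dw : ℕ → ℕ} (hdw : ∀ w, dw w ≠ 0) (X : ℝ) (a : ℕ) {R : Finset α}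
    (hcard : ∀ D ∈ R, #(supp D) = q)
    (hdeg : ∀ P : Finset V, P.Nonempty → codegree supp R P < 2 ^ a * dw #P) :
    (∃ a', ∃ t ∈ Icc 1 q, ∃ R' ⊆ R, ∃ 𝒢 P, IsGrouping supp R' (2 ^ a' * dw t) t 𝒢 P ∧
        (∀ P : Finset V, P.Nonempty → codegree supp R' P < 2 ^ (a' + 1) * dw #P) ∧
        X ≤ #𝒢 * (2 ^ a' * dw t : ℕ)) ∨
      (#R : ℝ) ≤ a * (q * X) + Fintype.card V * dw 1 := by
  classical
  induction a generalizing R with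
  | zero =>
    have hne : ∀ D ∈ R, (supp D).Nonempty := fun D hD => card_ne_zero.1 (hcard D hD ▸ hq)
    have hsmall : #R ≤ Fintype.card V * dw 1 :=
      card_le_card_mul_of_codegree_singleton_le hne fun v => by
        simpa using (hdeg {v} (singleton_nonempty v)).le
    right
    rw [Nat.cast_zero, zero_mul, zero_add]
    exact_mod_cast hsmall
  | succ a ih =>
    have hτ : ∀ w, 2 ^ a * dw w ≠ 0 := fun w => mul_ne_zero (by positivity) (hdw w)
    obtain ⟨t, ht, 𝒢, P, h𝒢, hX⟩ | ⟨S, hSR, hS, hrest⟩ :=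
      exists_isGrouping_or_exists_codegree_sdiff_lt hτ X hcard
    · exact Or.inl ⟨a, t, ht, R, subset_rfl, 𝒢, P, h𝒢, hdeg, hX⟩
    refine (ih (fun D hD => hcard D (sdiff_subset hD)) hrest).imp ?_ fun hsmall => ?_
    · rintro ⟨a', t, ht, R', hR', h⟩
      exact ⟨a', t, ht, R', hR'.trans sdiff_subset, h⟩
    have hsplit : (#R : ℝ) = #(R \ S) + #S := mod_cast (card_sdiff_add_card_eq_card hSR).symm
    push_cast
    linarith

end Codegree

section TupleOf

variable {α ν : Type*} [Fintype α] [Nonempty ν]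

open Classical in
/-- An enumeration by `α` of the finite set `U`, whose cardinality should be that of `α`; otherwise
the value is arbitrary. -/
noncomputable def tupleOf (α : Type*) [Fintype α] (U : Finset ν) : α → ν :=
  if h : Nonempty (α ≃ U) then fun a => h.some a else fun _ => Classical.arbitrary ν

variable {U : Finset ν}

lemma exists_tupleOf_eq_equiv (hU : #U = Fintype.card α) :
    ∃ e : α ≃ U, tupleOf α U = fun a => (e a : ν) := by
  have h : Nonempty (α ≃ U) := Fintype.card_eq.1 (by rw [Fintype.card_coe, hU])
  exact ⟨h.some, dif_pos h⟩

lemma tupleOf_mem (hU : #U = Fintype.card α) (a : α) : tupleOf α U a ∈ U := by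
  obtain ⟨e, he⟩ := exists_tupleOf_eq_equiv hU
  rw [he]
  exact (e a).2

lemma tupleOf_injective (hU : #U = Fintype.card α) : Function.Injective (tupleOf α U) := by
  obtain ⟨e, he⟩ := exists_tupleOf_eq_equiv hU
  rw [he]
  exact Subtype.val_injective.comp e.injective

lemma prod_tupleOf {M : Type*} [CommMonoid M] (hU : #U = Fintype.card α) (f : ν → M) :
    ∏ a, f (tupleOf α U a) = ∏ v ∈ U, f v := by
  obtain ⟨e, he⟩ := exists_tupleOf_eq_equiv hU
  rw [he, e.prod_comp fun u : U => f u, prod_coe_sort]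

end TupleOf

section Pairs

variable {κ ν : Type*}

/-- A family `R` of clauses on `q` code coordinates, any two of which with the same message
coordinate are disjoint. -/
structure IsMatchingFamily (q : ℕ) (R : Finset (κ × Finset ν)) : Prop where
  card_eq : ∀ D ∈ R, #D.2 = q
  disjoint : ∀ D ∈ R, ∀ D' ∈ R, D.1 = D'.1 → D ≠ D' → Disjoint D.2 D'.2

/-- The ordered pairs of distinct members of the same group, together with this group. -/
def groupPairs {α : Type*} (𝒢 : Finset (Finset α)) : Finset ((_ : Finset α) × α × α) :=
  𝒢.sigma offDiag

variable {q d t : ℕ} {R : Finset (κ × Finset ν)} {𝒢 : Finset (Finset (κ × Finset ν))}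
  {P : Finset (κ × Finset ν) → Finset ν}

lemma mem_groupPairs {α : Type*} {𝒢 : Finset (Finset α)} {p : (_ : Finset α) × α × α} :
    p ∈ groupPairs 𝒢 ↔ p.1 ∈ 𝒢 ∧ p.2.1 ∈ p.1 ∧ p.2.2 ∈ p.1 ∧ p.2.1 ≠ p.2.2 := by
  rw [groupPairs, mem_sigma, mem_offDiag]

lemma IsMatchingFamily.eq_of_mem_of_mem (hR : IsMatchingFamily q R) {D D' : κ × Finset ν}
    (hD : D ∈ R) (hD' : D' ∈ R) (hcol : D.1 = D'.1) {v : ν} (hv : v ∈ D.2) (hv' : v ∈ D'.2) :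
    D = D' :=
  by_contra fun hne => disjoint_left.1 (hR.disjoint D hD D' hD' hcol hne) hv hv'

lemma IsMatchingFamily.card_filter_fst_le [Fintype ν] [DecidableEq κ] (hR : IsMatchingFamily q R)
    (hq : q ≠ 0) (i : κ) : #{D ∈ R | D.1 = i} ≤ Fintype.card ν := by
  classical
  rw [← mul_one (Fintype.card ν)]
  refine card_le_card_mul_of_codegree_singleton_le (supp := Prod.snd)
    (fun D hD => card_ne_zero.1 ?_) fun v => card_le_one.2 fun D hD D' hD' => ?_
  · rwa [hR.card_eq D (mem_of_mem_filter D hD)]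
  · simp only [mem_filter, singleton_subset_iff] at hD hD'
    exact hR.eq_of_mem_of_mem hD.1.1 hD'.1.1 (hD.1.2.trans hD'.1.2.symm) hD.2 hD'.2

lemma IsGrouping.eq_of_mem_of_mem {α V : Type*} {supp : α → Finset V} {R : Finset α}
    {𝒢 : Finset (Finset α)} {P : Finset α → Finset V} (h𝒢 : IsGrouping supp R d t 𝒢 P)
    {G G' : Finset α} (hG : G ∈ 𝒢) (hG' : G' ∈ 𝒢) {D : α} (hD : D ∈ G) (hD' : D ∈ G') : G = G' :=
  by_contra fun hne => disjoint_left.1 (h𝒢.pairwiseDisjoint hG hG' hne) hD hD'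

lemma IsGrouping.center_nonempty {α V : Type*} {supp : α → Finset V} {R : Finset α}
    {𝒢 : Finset (Finset α)} {P : Finset α → Finset V} (h𝒢 : IsGrouping supp R d t 𝒢 P) (ht : t ≠ 0)
    {G : Finset α} (hG : G ∈ 𝒢) : (P G).Nonempty :=
  card_ne_zero.1 (h𝒢.card_center G hG ▸ ht)

lemma IsGrouping.fst_injOn (hR : IsMatchingFamily q R) (h𝒢 : IsGrouping Prod.snd R d t 𝒢 P)
    (ht : t ≠ 0) {G : Finset (κ × Finset ν)} (hG : G ∈ 𝒢) :
    Set.InjOn Prod.fst (G : Set (κ × Finset ν)) := fun D hD D' hD' hcol => by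
  obtain ⟨v, hv⟩ := h𝒢.center_nonempty ht hG
  exact hR.eq_of_mem_of_mem (h𝒢.subset G hG hD) (h𝒢.subset G hG hD') hcol
    (h𝒢.center_subset G hG D hD hv) (h𝒢.center_subset G hG D' hD' hv)

lemma card_le_codegree_of_subset_groupPairs [DecidableEq ν] (hR : IsMatchingFamily q R)
    (h𝒢 : IsGrouping Prod.snd R d t 𝒢 P) (ht : t ≠ 0)
    {S : Finset ((_ : Finset (κ × Finset ν)) × (κ × Finset ν) × (κ × Finset ν))}
    (hS : S ⊆ groupPairs 𝒢) {i : κ} (hcol : ∀ p ∈ S, p.2.1.1 = i) {Q : Finset ν}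
    (hQ : ∀ p ∈ S, Q ⊆ p.2.2.2) : #S ≤ codegree Prod.snd R Q := by
  refine card_le_card_of_injOn (fun p => p.2.2) (fun p hp => ?_) ?_
  · obtain ⟨hG, -, hD', -⟩ := mem_groupPairs.1 (hS hp)
    exact mem_filter.2 ⟨h𝒢.subset _ hG hD', hQ p hp⟩
  · rintro ⟨G, D₁, D⟩ hp ⟨G', D₂, D'⟩ hp' rfl
    obtain ⟨hG, hD₁, hD, -⟩ := mem_groupPairs.1 (hS hp)
    obtain ⟨hG', hD₂, hD', -⟩ := mem_groupPairs.1 (hS hp')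
    obtain rfl := h𝒢.eq_of_mem_of_mem hG hG' hD hD'
    obtain rfl := h𝒢.fst_injOn hR ht hG hD₁ hD₂ ((hcol _ hp).trans (hcol _ hp').symm)
    rfl

lemma card_filter_groupPairs_le [Fintype ν] [DecidableEq κ] (hR : IsMatchingFamily q R)
    (hq : q ≠ 0) (h𝒢 : IsGrouping Prod.snd R d t 𝒢 P) (i : κ) :
    #{p ∈ groupPairs 𝒢 | p.2.1.1 = i} ≤ Fintype.card ν * d := by
  classical
  set S := {p ∈ groupPairs 𝒢 | p.2.1.1 = i}
  have himage : S.image (fun p => p.2.1) ⊆ {D ∈ R | D.1 = i} := image_subset_iff.2 fun p hp => by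
    obtain ⟨hp, hcol⟩ := mem_filter.1 hp
    obtain ⟨hG, hD, -⟩ := mem_groupPairs.1 hp
    exact mem_filter.2 ⟨h𝒢.subset _ hG hD, hcol⟩
  have hfiber : ∀ D ∈ S.image (fun p => p.2.1), #{p ∈ S | p.2.1 = D} ≤ d := fun D hD => by
    obtain ⟨⟨G, D, D'⟩, hp, rfl⟩ := mem_image.1 hD
    obtain ⟨hG, hDG, -⟩ := mem_groupPairs.1 (mem_of_mem_filter _ hp)
    rw [← h𝒢.card_eq G hG]
    have hgroup : ∀ p ∈ S, p.2.1 = D → p.1 = G ∧ p.2.2 ∈ G := fun p hp hpD => by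
      obtain ⟨hG', hDG', hD', -⟩ := mem_groupPairs.1 (mem_of_mem_filter _ hp)
      obtain rfl := h𝒢.eq_of_mem_of_mem hG hG' hDG (hpD ▸ hDG')
      exact ⟨rfl, hD'⟩
    refine card_le_card_of_injOn (fun p => p.2.2) (fun p hp => ?_) fun p hp p' hp' hpp' => ?_
    · obtain ⟨hp, hpD⟩ := mem_filter.1 hp
      exact (hgroup p hp hpD).2
    · obtain ⟨hp, hpD⟩ := mem_filter.1 hp
      obtain ⟨hp', hpD'⟩ := mem_filter.1 hp'
      exact Sigma.ext ((hgroup p hp hpD).1.trans (hgroup p' hp' hpD').1.symm)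
        (heq_of_eq (Prod.ext (hpD.trans hpD'.symm) hpp'))
  calc #S ≤ d * #(S.image fun p => p.2.1) := card_le_mul_card_image _ _ hfiber
    _ ≤ d * Fintype.card ν := by
        gcongr
        exact (card_le_card himage).trans (hR.card_filter_fst_le hq i)
    _ = _ := mul_comm _ _

end Pairs

section Agreement

variable {α κ ν : Type*} [Fintype α] [DecidableEq α] [DecidableEq ν] [Nonempty ν]

/-- The Kikuchi tuple of a pair of clauses in a group with center `P G`: the coordinates in `A` are
taken from an enumeration of the first clause without the center, the others from the second
clause. -/
noncomputable def mixedTuple (P : Finset (κ × Finset ν) → Finset ν) (A : Finset α)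
    (p : (_ : Finset (κ × Finset ν)) × (κ × Finset ν) × (κ × Finset ν)) : α → ν :=
  A.piecewise (tupleOf α (p.2.1.2 \ P p.1)) (tupleOf α (p.2.2.2 \ P p.1))

variable {q d t : ℕ} {R : Finset (κ × Finset ν)} {𝒢 : Finset (Finset (κ × Finset ν))}
  {P : Finset (κ × Finset ν) → Finset ν}

omit [DecidableEq α] [Nonempty ν] in
lemma IsGrouping.card_sdiff_center (hR : IsMatchingFamily q R)
    (h𝒢 : IsGrouping Prod.snd R d t 𝒢 P) (hq : q = t + Fintype.card α)
    {G : Finset (κ × Finset ν)} (hG : G ∈ 𝒢) {D : κ × Finset ν} (hD : D ∈ G) :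
    #(D.2 \ P G) = Fintype.card α := by
  rw [card_sdiff_of_subset (h𝒢.center_subset G hG D hD), hR.card_eq D (h𝒢.subset G hG hD),
    h𝒢.card_center G hG, hq, Nat.add_sub_cancel_left]

-- The centers cancel.
lemma clauseValue_mul_clauseValue_eq (hR : IsMatchingFamily q R)
    (h𝒢 : IsGrouping Prod.snd R d t 𝒢 P) (hq : q = t + Fintype.card α)
    {p : (_ : Finset (κ × Finset ν)) × (κ × Finset ν) × (κ × Finset ν)} (hp : p ∈ groupPairs 𝒢)
    (A : Finset α) (E : (κ → ℤˣ) → ν → ℤˣ) (b : κ → ℤˣ) :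
    clauseValue E p.2.1 b * clauseValue E p.2.2 b
      = sgn (b p.2.1.1) * sgn (b p.2.2.1) *
        ∏ a, sgn (E b (mixedTuple P A p a)) * sgn (E b (mixedTuple P Aᶜ p a)) := by
  obtain ⟨hG, hD, hD', -⟩ := mem_groupPairs.1 hp
  have hmix : ∏ a, sgn (E b (mixedTuple P A p a)) * sgn (E b (mixedTuple P Aᶜ p a))
      = (∏ v ∈ p.2.1.2 \ P p.1, sgn (E b v)) * ∏ v ∈ p.2.2.2 \ P p.1, sgn (E b v) := by
    rw [← prod_tupleOf (h𝒢.card_sdiff_center hR hq hG hD),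
      ← prod_tupleOf (h𝒢.card_sdiff_center hR hq hG hD'), ← prod_mul_distrib]
    refine prod_congr rfl fun a _ => ?_
    by_cases ha : a ∈ A <;> simp [mixedTuple, ha, mul_comm]
  have hcenter : (∏ v ∈ P p.1, sgn (E b v)) * ∏ v ∈ P p.1, sgn (E b v) = 1 := by
    rw [← map_prod, sgn_mul_self]
  rw [hmix, clauseValue, clauseValue, ← prod_sdiff (h𝒢.center_subset _ hG _ hD),
    ← prod_sdiff (h𝒢.center_subset _ hG _ hD')]
  linear_combination (sgn (b p.2.1.1) * sgn (b p.2.2.1) * (∏ v ∈ p.2.1.2 \ P p.1, sgn (E b v)) *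
    ∏ v ∈ p.2.2.2 \ P p.1, sgn (E b v)) * hcenter

variable [DecidableEq κ]

/-- The pairs of clauses whose first member has message coordinate `i` and whose tuple agrees with
`w` on `W`. -/
noncomputable def agreeingPairs (𝒢 : Finset (Finset (κ × Finset ν)))
    (P : Finset (κ × Finset ν) → Finset ν) (A W : Finset α) (w : α → ν) (i : κ) :
    Finset ((_ : Finset (κ × Finset ν)) × (κ × Finset ν) × (κ × Finset ν)) :=
  {p ∈ groupPairs 𝒢 | p.2.1.1 = i ∧ ∀ a ∈ W, mixedTuple P A p a = w a}

variable {A W : Finset α} {w : α → ν} {i : κ}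

lemma image_sdiff_subset_of_mem_agreeingPairs (hR : IsMatchingFamily q R)
    (h𝒢 : IsGrouping Prod.snd R d t 𝒢 P) (hq : q = t + Fintype.card α)
    {p : (_ : Finset (κ × Finset ν)) × (κ × Finset ν) × (κ × Finset ν)}
    (hp : p ∈ agreeingPairs 𝒢 P A W w i) :
    (W \ A).image w ⊆ p.2.2.2 \ P p.1 ∧ #((W \ A).image w) = #(W \ A) := by
  obtain ⟨hp, -, hagree⟩ := mem_filter.1 hp
  obtain ⟨hG, -, hD', -⟩ := mem_groupPairs.1 hp
  have hU := h𝒢.card_sdiff_center hR hq hG hD'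
  have hw : Set.EqOn (tupleOf α (p.2.2.2 \ P p.1)) w (W \ A : Finset α) := fun a ha => by
    obtain ⟨haW, haA⟩ := mem_sdiff.1 ha
    rw [← hagree a haW, mixedTuple, piecewise_eq_of_notMem _ _ _ haA]
  refine ⟨image_subset_iff.2 fun a ha => ?_, card_image_of_injOn ?_⟩
  · rw [← hw ha]
    exact tupleOf_mem hU a
  · exact (tupleOf_injective hU).injOn.congr hw

variable {B : ℕ → ℝ}

lemma card_agreeingPairs_le_of_disjoint (hR : IsMatchingFamily q R)
    (h𝒢 : IsGrouping Prod.snd R d t 𝒢 P) (hq : q = t + Fintype.card α) (ht : t ≠ 0)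
    (hB : ∀ w, 0 ≤ B w) (hdeg : ∀ Q : Finset ν, Q.Nonempty → codegree Prod.snd R Q ≤ B #Q)
    (hW : W.Nonempty) (hWA : Disjoint W A) : #(agreeingPairs 𝒢 P A W w i) ≤ B #W := by
  obtain hempty | ⟨p₀, hp₀⟩ := (agreeingPairs 𝒢 P A W w i).eq_empty_or_nonempty
  · rw [hempty, card_empty, Nat.cast_zero]
    exact hB _
  have himage := fun p (hp : p ∈ agreeingPairs 𝒢 P A W w i) =>
    image_sdiff_subset_of_mem_agreeingPairs hR h𝒢 hq hp
  rw [sdiff_eq_self_of_disjoint hWA] at himage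
  rw [← (himage p₀ hp₀).2]
  refine le_trans (Nat.cast_le.2 ?_) (hdeg _ (hW.image w))
  exact card_le_codegree_of_subset_groupPairs hR h𝒢 ht (filter_subset _ _)
    (fun p hp => (mem_filter.1 hp).2.1) fun p hp => (himage p hp).1.trans sdiff_subset

-- A coordinate of the first clause determines this clause, hence the group and its center, which
-- the second clause contains as well.
lemma card_agreeingPairs_le_of_not_disjoint (hR : IsMatchingFamily q R)
    (h𝒢 : IsGrouping Prod.snd R d t 𝒢 P) (hq : q = t + Fintype.card α) (ht : t ≠ 0)
    (hB : ∀ w, 0 ≤ B w) (hdeg : ∀ Q : Finset ν, Q.Nonempty → codegree Prod.snd R Q ≤ B #Q)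
    (hWA : ¬Disjoint W A) : #(agreeingPairs 𝒢 P A W w i) ≤ B (t + #(W \ A)) := by
  obtain hempty | ⟨p₀, hp₀⟩ := (agreeingPairs 𝒢 P A W w i).eq_empty_or_nonempty
  · rw [hempty, card_empty, Nat.cast_zero]
    exact hB _
  obtain ⟨a, haW, haA⟩ := not_disjoint_iff.1 hWA
  have hfirst : ∀ p ∈ agreeingPairs 𝒢 P A W w i, w a ∈ p.2.1.2 := fun p hp => by
    obtain ⟨hp, -, hagree⟩ := mem_filter.1 hp
    obtain ⟨hG, hD, -⟩ := mem_groupPairs.1 hp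
    rw [← hagree a haW, mixedTuple, piecewise_eq_of_mem _ _ _ haA]
    exact sdiff_subset (tupleOf_mem (h𝒢.card_sdiff_center hR hq hG hD) a)
  have hgroup : ∀ p ∈ agreeingPairs 𝒢 P A W w i, p.1 = p₀.1 := fun p hp => by
    obtain ⟨hpG, hcol, -⟩ := mem_filter.1 hp
    obtain ⟨hpG₀, hcol₀, -⟩ := mem_filter.1 hp₀
    obtain ⟨hG, hD, -⟩ := mem_groupPairs.1 hpG
    obtain ⟨hG₀, hD₀, -⟩ := mem_groupPairs.1 hpG₀
    have hDD₀ := hR.eq_of_mem_of_mem (h𝒢.subset _ hG hD) (h𝒢.subset _ hG₀ hD₀)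
      (hcol.trans hcol₀.symm) (hfirst p hp) (hfirst p₀ hp₀)
    exact h𝒢.eq_of_mem_of_mem hG hG₀ hD (hDD₀ ▸ hD₀)
  have hG₀ := (mem_groupPairs.1 (mem_filter.1 hp₀).1).1
  have himage := fun p (hp : p ∈ agreeingPairs 𝒢 P A W w i) =>
    image_sdiff_subset_of_mem_agreeingPairs hR h𝒢 hq hp
  have hcard : #(P p₀.1 ∪ (W \ A).image w) = t + #(W \ A) := by
    rw [card_union_of_disjoint (disjoint_sdiff.mono_right (himage p₀ hp₀).1),
      h𝒢.card_center _ hG₀, (himage p₀ hp₀).2]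
  rw [← hcard]
  refine le_trans (Nat.cast_le.2 ?_) (hdeg _ ((h𝒢.center_nonempty ht hG₀).mono subset_union_left))
  refine card_le_codegree_of_subset_groupPairs hR h𝒢 ht (filter_subset _ _)
    (fun p hp => (mem_filter.1 hp).2.1) fun p hp => union_subset ?_ ?_
  · obtain ⟨hG, -, hD', -⟩ := mem_groupPairs.1 (mem_filter.1 hp).1
    exact hgroup p hp ▸ h𝒢.center_subset _ hG _ hD'
  · exact (himage p hp).1.trans sdiff_subset

end Agreement

/-! ### Degrees in the Kikuchi graphs -/

section AgreementWeight

variable {α κ ν ι : Type*} [Fintype α] [DecidableEq α] [DecidableEq ν]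

lemma sum_agreementWeight_eq (θ : ℝ) (S : Finset ι) (x : ι → α → ν) (w : α → ν) :
    ∑ p ∈ S, agreementWeight θ (x p) w
      = ∑ W : Finset α, (#{p ∈ S | ∀ a ∈ W, x p a = w a} : ℝ) * θ ^ #Wᶜ := by
  have hexpand : ∀ p, agreementWeight θ (x p) w
      = ∑ W : Finset α, (if ∀ a ∈ W, x p a = w a then 1 else 0) * θ ^ #Wᶜ := fun p => by
    rw [agreementWeight, prod_add, powerset_univ]
    refine sum_congr rfl fun W _ => ?_
    rw [prod_ite_zero, prod_const_one, prod_const, ← compl_eq_univ_sdiff]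
    congr
  simp_rw [hexpand]
  rw [sum_comm]
  simp_rw [← sum_mul, sum_boole]

end AgreementWeight

/-- The threshold, up to a constant factor, for the codegrees of `w`-element sets in a family of
clauses; the density `ρ` of the words of a Kikuchi vertex is `n ^ (-2 / q)` in the end. -/
noncomputable def codegreeThreshold (n ρ : ℝ) (w : ℕ) : ℝ := max 1 (n * ρ ^ w)

section Threshold

variable {n ρ : ℝ} {q : ℕ}

lemma one_le_codegreeThreshold (n ρ : ℝ) (w : ℕ) : 1 ≤ codegreeThreshold n ρ w := le_max_left _ _

lemma codegreeThreshold_mul_pow (hρ : 0 ≤ ρ) (s w : ℕ) :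
    codegreeThreshold n ρ s * ρ ^ w = max (ρ ^ w) (n * ρ ^ (s + w)) := by
  rw [codegreeThreshold, max_mul_of_nonneg _ _ (by positivity), one_mul, mul_assoc, pow_add]

lemma mul_pow_le_one_of_sq_mul_pow_eq_one (hρ : 0 < ρ) (hρ1 : ρ ≤ 1) (hn : n ^ 2 * ρ ^ q = 1)
    {e : ℕ} (he : q ≤ 2 * e) : n * ρ ^ e ≤ 1 := by
  refine (abs_le_one_iff_mul_self_le_one.2 ?_).trans' (le_abs_self _)
  calc n * ρ ^ e * (n * ρ ^ e) = n ^ 2 * ρ ^ (2 * e) := by ring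
    _ ≤ n ^ 2 * ρ ^ q := by
      gcongr ?_ * ?_
      exact pow_le_pow_of_le_one hρ.le hρ1 he
    _ = 1 := hn

lemma mul_codegreeThreshold_mul_pow (hn0 : 0 ≤ n) (hρ : 0 ≤ ρ) {t h : ℕ}
    (hn : n ^ 2 * ρ ^ (t + h) = 1) :
    n * (codegreeThreshold n ρ t * ρ ^ h) = codegreeThreshold n ρ h := by
  rw [codegreeThreshold_mul_pow hρ, mul_max_of_nonneg _ _ hn0, ← mul_assoc, ← sq, hn, max_comm,
    codegreeThreshold]

end Threshold

section KikuchiDegree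

variable {α κ ν : Type*} [Fintype α] [DecidableEq α] [DecidableEq κ] [Fintype ν] [DecidableEq ν]
  [Nonempty ν] {q d t : ℕ} {R : Finset (κ × Finset ν)} {𝒢 : Finset (Finset (κ × Finset ν))}
  {P : Finset (κ × Finset ν) → Finset ν} {A W : Finset α} {w : α → ν} {i : κ} {Λ ρ : ℝ}

lemma card_agreeingPairs_empty_mul_pow_le (hR : IsMatchingFamily q R)
    (h𝒢 : IsGrouping Prod.snd R d t 𝒢 P) (hq : q = t + Fintype.card α) (ht : t ≠ 0)
    (hρ : 0 ≤ ρ) (hnρ : (Fintype.card ν : ℝ) ^ 2 * ρ ^ q = 1)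
    (hd : d ≤ 2 * Λ * codegreeThreshold (Fintype.card ν) ρ t) :
    #(agreeingPairs 𝒢 P A ∅ w i) * ρ ^ Fintype.card α
      ≤ 2 * Λ * codegreeThreshold (Fintype.card ν) ρ (Fintype.card α) := by
  set n := (Fintype.card ν : ℝ)
  have hcount : (#(agreeingPairs 𝒢 P A ∅ w i) : ℝ) ≤ n * d := by
    simp only [agreeingPairs, notMem_empty, false_imp_iff, implies_true, and_true]
    exact (Nat.cast_le.2 (card_filter_groupPairs_le hR (by omega) h𝒢 i)).trans_eq
      (Nat.cast_mul _ _)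
  calc (#(agreeingPairs 𝒢 P A ∅ w i) : ℝ) * ρ ^ Fintype.card α
      ≤ n * (2 * Λ * codegreeThreshold n ρ t) * ρ ^ Fintype.card α := by
        gcongr
        exact hcount.trans (by gcongr)
    _ = 2 * Λ * codegreeThreshold n ρ (Fintype.card α) := by
        rw [← mul_codegreeThreshold_mul_pow (h := Fintype.card α) (by positivity) hρ
          (hq ▸ hnρ)]
        ring

lemma card_agreeingPairs_mul_pow_le (hR : IsMatchingFamily q R)
    (h𝒢 : IsGrouping Prod.snd R d t 𝒢 P) (hq : q = t + Fintype.card α) (ht : t ≠ 0)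
    (hρ : 0 < ρ) (hρ1 : ρ ≤ 1) (hnρ : (Fintype.card ν : ℝ) ^ 2 * ρ ^ q = 1) (hΛ : 0 ≤ Λ)
    (hdeg : ∀ Q : Finset ν, Q.Nonempty →
      codegree Prod.snd R Q ≤ 4 * Λ * codegreeThreshold (Fintype.card ν) ρ #Q)
    (hd : d ≤ 2 * Λ * codegreeThreshold (Fintype.card ν) ρ t) (hA : 2 * #A ≤ q) :
    #(agreeingPairs 𝒢 P A W w i) * ρ ^ #Wᶜ
      ≤ 4 * Λ * codegreeThreshold (Fintype.card ν) ρ (Fintype.card α) := by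
  set n := (Fintype.card ν : ℝ)
  have hB : ∀ w, 0 ≤ 4 * Λ * codegreeThreshold n ρ w := fun w =>
    mul_nonneg (by positivity) (zero_le_one.trans (one_le_codegreeThreshold n ρ w))
  have hpow : ∀ e : ℕ, ρ ^ e ≤ 1 := fun e => pow_le_one₀ hρ.le hρ1
  obtain rfl | hW := W.eq_empty_or_nonempty
  · rw [compl_empty, card_univ]
    exact (card_agreeingPairs_empty_mul_pow_le hR h𝒢 hq ht hρ.le hnρ hd).trans
      (by linarith [hB (Fintype.card α)])
  by_cases hWA : Disjoint W A
  · calc #(agreeingPairs 𝒢 P A W w i) * ρ ^ #Wᶜ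
        ≤ 4 * Λ * codegreeThreshold n ρ #W * ρ ^ #Wᶜ := by
          gcongr
          exact card_agreeingPairs_le_of_disjoint hR h𝒢 hq ht hB hdeg hW hWA
      _ ≤ 4 * Λ * codegreeThreshold n ρ (Fintype.card α) := by
          rw [mul_assoc, codegreeThreshold_mul_pow hρ.le, card_add_card_compl]
          gcongr
          exact max_le_max (hpow _) le_rfl
  · have hexp : q ≤ 2 * (t + #(W \ A) + #Wᶜ) := by
      have hcompl := card_add_card_compl W
      have hsplit := card_sdiff_add_card_inter W A
      have hinter := card_le_card (inter_subset_right : W ∩ A ⊆ A)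
      omega
    calc #(agreeingPairs 𝒢 P A W w i) * ρ ^ #Wᶜ
        ≤ 4 * Λ * codegreeThreshold n ρ (t + #(W \ A)) * ρ ^ #Wᶜ := by
          gcongr
          exact card_agreeingPairs_le_of_not_disjoint hR h𝒢 hq ht hB hdeg hWA
      _ ≤ 4 * Λ * codegreeThreshold n ρ (Fintype.card α) := by
          rw [mul_assoc, codegreeThreshold_mul_pow hρ.le]
          gcongr
          exact (max_le (hpow _) (mul_pow_le_one_of_sq_mul_pow_eq_one hρ hρ1 hnρ hexp)).trans
            (one_le_codegreeThreshold _ _ _)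

lemma sum_agreementWeight_mixedTuple_le (hR : IsMatchingFamily q R)
    (h𝒢 : IsGrouping Prod.snd R d t 𝒢 P) (hq : q = t + Fintype.card α) (ht : t ≠ 0)
    (hρ : 0 < ρ) (hρ1 : ρ ≤ 1) (hnρ : (Fintype.card ν : ℝ) ^ 2 * ρ ^ q = 1) (hΛ : 0 ≤ Λ)
    (hdeg : ∀ Q : Finset ν, Q.Nonempty →
      codegree Prod.snd R Q ≤ 4 * Λ * codegreeThreshold (Fintype.card ν) ρ #Q)
    (hd : d ≤ 2 * Λ * codegreeThreshold (Fintype.card ν) ρ t) (hA : 2 * #A ≤ q) {θ : ℝ}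
    (hθ : 0 ≤ θ) (hθρ : θ ≤ 2 * ρ) (i : κ) (w : α → ν) :
    ∑ p ∈ groupPairs 𝒢 with p.2.1.1 = i, agreementWeight θ (mixedTuple P A p) w
      ≤ 4 ^ Fintype.card α *
        (4 * Λ * codegreeThreshold (Fintype.card ν) ρ (Fintype.card α)) := by
  set T := 4 * Λ * codegreeThreshold (Fintype.card ν) ρ (Fintype.card α)
  rw [sum_agreementWeight_eq]
  calc ∑ W : Finset α, (#{p ∈ {p ∈ groupPairs 𝒢 | p.2.1.1 = i} |
          ∀ a ∈ W, mixedTuple P A p a = w a} : ℝ) * θ ^ #Wᶜ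
      ≤ ∑ _W : Finset α, 2 ^ Fintype.card α * T := by
        refine sum_le_sum fun W _ => ?_
        rw [filter_filter]
        calc (#(agreeingPairs 𝒢 P A W w i) : ℝ) * θ ^ #Wᶜ
            ≤ #(agreeingPairs 𝒢 P A W w i) * (2 * ρ) ^ #Wᶜ := by gcongr
          _ = 2 ^ #Wᶜ * (#(agreeingPairs 𝒢 P A W w i) * ρ ^ #Wᶜ) := by rw [mul_pow]; ring
          _ ≤ 2 ^ Fintype.card α * T := by
              gcongr
              · norm_num
              · exact card_le_univ _
              · exact card_agreeingPairs_mul_pow_le hR h𝒢 hq ht hρ hρ1 hnρ hΛ hdeg hd hA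
    _ = 4 ^ Fintype.card α * T := by
        rw [sum_const, card_univ, Fintype.card_finset, nsmul_eq_mul, ← mul_assoc]
        norm_num [← mul_pow]

end KikuchiDegree

section Grouping

variable {α β κ ν : Type*} [Fintype α] [DecidableEq α] [Fintype β] [DecidableEq β] [Nonempty β]
  [Fintype κ] [DecidableEq κ] [Fintype ν] [DecidableEq ν] [Nonempty ν] {q d t : ℕ}
  {R : Finset (κ × Finset ν)} {𝒢 : Finset (Finset (κ × Finset ν))}
  {P : Finset (κ × Finset ν) → Finset ν} {E : (κ → ℤˣ) → ν → ℤˣ} {Λ ρ ε : ℝ}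

lemma expect_sum_groupPairs_le (hR : IsMatchingFamily q R)
    (h𝒢 : IsGrouping Prod.snd R d t 𝒢 P) (hq : q = t + Fintype.card α) (ht : t ≠ 0)
    {A : Finset α} {T : ℝ} (hT : 0 < T)
    (hA : ∀ i w, ∑ p ∈ groupPairs 𝒢 with p.2.1.1 = i,
      agreementWeight (Fintype.card β / Fintype.card ν) (mixedTuple P A p) w ≤ T)
    (hAc : ∀ i w, ∑ p ∈ groupPairs 𝒢 with p.2.1.1 = i,
      agreementWeight (Fintype.card β / Fintype.card ν) (mixedTuple P Aᶜ p) w ≤ T)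
    {m : ℕ} (hm : m ≠ 0) (hcard : (Fintype.card (α → β → ν) : ℝ) ≤ Real.exp 1 ^ (2 * m)) :
    𝔼 b, ∑ p ∈ groupPairs 𝒢, clauseValue E p.2.1 b * clauseValue E p.2.2 b
      ≤ 4 * (Real.exp 1 * (8 * T / (Fintype.card β / Fintype.card ν : ℝ) ^ Fintype.card α) *
          √(Real.exp 1 * (2 * m) * Fintype.card κ)) := by
  have hne : ∀ p ∈ groupPairs 𝒢, p.2.1.1 ≠ p.2.2.1 := fun p hp hcol => by
    obtain ⟨hG, hD, hD', hDD'⟩ := mem_groupPairs.1 hp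
    exact hDD' (h𝒢.fst_injOn hR ht hG hD hD' hcol)
  rw [expect_congr rfl fun b _ => sum_congr rfl fun p hp =>
    clauseValue_mul_clauseValue_eq hR h𝒢 hq hp A E b]
  exact expect_sum_sgn_mul_sgn_mul_prod_le hne hT hA hAc E hm hcard

omit [Fintype ν] [DecidableEq ν] [Nonempty ν] in
lemma three_mul_sq_mul_card_le_expect_sum_groupPairs (h𝒢 : IsGrouping Prod.snd R d t 𝒢 P)
    (hε : 0 ≤ ε) (hd : 1 ≤ ε ^ 2 * d) (hadv : ∀ D ∈ R, 2 * ε ≤ 𝔼 b, clauseValue E D b) :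
    3 * (ε ^ 2 * d ^ 2) * #𝒢
      ≤ 𝔼 b, ∑ p ∈ groupPairs 𝒢, clauseValue E p.2.1 b * clauseValue E p.2.2 b := by
  simp_rw [groupPairs, sum_sigma]
  rw [expect_sum_comm, mul_comm, ← nsmul_eq_mul]
  refine card_nsmul_le_sum _ _ _ fun G hG => ?_
  rw [← h𝒢.card_eq G hG] at hd ⊢
  exact three_mul_sq_le_expect_sum_offDiag hε hd fun D hD => hadv D (h𝒢.subset G hG hD)

lemma three_mul_sq_mul_card_mul_le (hR : IsMatchingFamily q R)
    (h𝒢 : IsGrouping Prod.snd R d t 𝒢 P) (hq : q = t + Fintype.card α) (ht : t ≠ 0)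
    (hadv : ∀ D ∈ R, 2 * ε ≤ 𝔼 b, clauseValue E D b) (hε : 0 ≤ ε)
    (hρ : 0 < ρ) (hρ1 : ρ ≤ 1) (hnρ : (Fintype.card ν : ℝ) ^ 2 * ρ ^ q = 1)
    (hβ : ρ ≤ Fintype.card β / Fintype.card ν)
    (hβ' : (Fintype.card β / Fintype.card ν : ℝ) ≤ 2 * ρ) (hΛ : 1 ≤ ε ^ 2 * Λ)
    (hdeg : ∀ Q : Finset ν, Q.Nonempty →
      codegree Prod.snd R Q ≤ 4 * Λ * codegreeThreshold (Fintype.card ν) ρ #Q)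
    (hd : Λ * codegreeThreshold (Fintype.card ν) ρ t ≤ d)
    (hd' : d ≤ 2 * Λ * codegreeThreshold (Fintype.card ν) ρ t)
    {m : ℕ} (hm : m ≠ 0) (hcard : (Fintype.card (α → β → ν) : ℝ) ≤ Real.exp 1 ^ (2 * m)) :
    3 * ε ^ 2 * (#𝒢 * d) ≤ 128 * Real.exp 1 * 4 ^ Fintype.card α * Fintype.card ν *
      √(Real.exp 1 * (2 * m) * Fintype.card κ) := by
  set n := (Fintype.card ν : ℝ)
  set h := Fintype.card α
  set θ := (Fintype.card β / n : ℝ)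
  have hn : 0 < n := Nat.cast_pos.2 Fintype.card_pos
  have hΛ0 : 0 < Λ := pos_of_mul_pos_right (zero_lt_one.trans_le hΛ) (sq_nonneg ε)
  have hΛd : Λ ≤ d := (le_mul_of_one_le_right hΛ0.le (one_le_codegreeThreshold n ρ t)).trans hd
  have hd0 : (0 : ℝ) < d := hΛ0.trans_le hΛd
  have hθ : 0 < θ := hρ.trans_le hβ
  obtain ⟨A, -, hAcard⟩ := exists_subset_card_eq (s := (univ : Finset α)) (n := h / 2) (by
    rw [card_univ]; exact Nat.div_le_self _ _)
  have hAccard : #Aᶜ = h - h / 2 := by rw [card_compl, hAcard]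
  have hweight : ∀ A : Finset α, 2 * #A ≤ q → ∀ i w, ∑ p ∈ groupPairs 𝒢 with p.2.1.1 = i,
      agreementWeight θ (mixedTuple P A p) w ≤ 4 ^ (h + 1) * n * d * θ ^ h := fun A hA i w => by
    calc ∑ p ∈ groupPairs 𝒢 with p.2.1.1 = i, agreementWeight θ (mixedTuple P A p) w
        ≤ 4 ^ h * (4 * Λ * codegreeThreshold n ρ h) :=
          sum_agreementWeight_mixedTuple_le hR h𝒢 hq ht hρ hρ1 hnρ hΛ0.le hdeg hd' hA hθ.le hβ' i w
      _ = 4 ^ (h + 1) * n * (Λ * codegreeThreshold n ρ t) * ρ ^ h := by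
          rw [← mul_codegreeThreshold_mul_pow hn.le hρ.le (hq ▸ hnρ)]
          ring
      _ ≤ 4 ^ (h + 1) * n * d * θ ^ h := by gcongr
  have hupper := expect_sum_groupPairs_le (E := E) hR h𝒢 hq ht (by positivity)
    (hweight A (by omega)) (hweight Aᶜ (by omega)) hm hcard
  have hlower := three_mul_sq_mul_card_le_expect_sum_groupPairs h𝒢 hε (hΛ.trans (by gcongr)) hadv
  refine le_of_mul_le_mul_right ?_ hd0
  calc 3 * ε ^ 2 * (#𝒢 * d) * d = 3 * (ε ^ 2 * d ^ 2) * #𝒢 := by ring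
    _ ≤ _ := hlower.trans hupper
    _ = _ := by
      rw [← mul_assoc 8, mul_div_cancel_right₀ _ (pow_ne_zero h hθ.ne')]
      ring

end Grouping

/-! ### The rate -/

section Rate

lemma one_half_le_log_natCast {n : ℕ} (hn : 2 ≤ n) : 1 / 2 ≤ Real.log n := by
  have hmono : Real.log 2 ≤ Real.log n := Real.log_le_log two_pos (mod_cast hn)
  linarith [Real.log_two_gt_d9]

lemma natLog_add_one_le_mul_log {n k : ℕ} (hn : 2 ≤ n) (hk : k ≤ n ^ 4) :
    (Nat.log 2 k + 1 : ℕ) ≤ 8 * Real.log n := by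
  have hpow : 2 ^ (Nat.log 2 k + 1) ≤ n ^ 5 := calc
    2 ^ (Nat.log 2 k + 1) ≤ 2 ^ Nat.log 2 (n ^ 4) * 2 := by
      rw [pow_succ]
      gcongr
      norm_num
    _ ≤ n ^ 4 * n := Nat.mul_le_mul (Nat.pow_log_le_self 2 (by positivity)) hn
    _ = n ^ 5 := by ring
  have hlog : (Nat.log 2 k + 1 : ℕ) * Real.log 2 ≤ 5 * Real.log n := by
    have := Real.log_le_log (by positivity) (show (2 : ℝ) ^ (Nat.log 2 k + 1) ≤ n ^ 5 by
      exact_mod_cast hpow)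
    rwa [Real.log_pow, Real.log_pow] at this
  nlinarith [Real.log_two_gt_d9, (Nat.log 2 k + 1).cast_nonneg (α := ℝ)]

lemma sq_mul_rpow_neg_two_div_pow {x : ℝ} (hx : 0 < x) {q : ℕ} (hq : q ≠ 0) :
    x ^ 2 * (x ^ (-(2 / q : ℝ))) ^ q = 1 := by
  rw [← Real.rpow_mul_natCast hx.le, neg_mul, div_mul_cancel₀ _ (Nat.cast_ne_zero.2 hq),
    Real.rpow_neg hx.le, Real.rpow_two, mul_inv_cancel₀ (by positivity)]

end Rate

section Grouping

variable {κ ν : Type*} {q : ℕ} {R : Finset (κ × Finset ν)}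

lemma IsMatchingFamily.mono (hR : IsMatchingFamily q R) {R' : Finset (κ × Finset ν)}
    (h : R' ⊆ R) : IsMatchingFamily q R' where
  card_eq D hD := hR.card_eq D (h hD)
  disjoint D hD D' hD' := hR.disjoint D (h hD) D' (h hD')

lemma IsMatchingFamily.codegree_le [Fintype κ] [DecidableEq ν] (hR : IsMatchingFamily q R)
    {Q : Finset ν} (hQ : Q.Nonempty) : codegree Prod.snd R Q ≤ Fintype.card κ := by
  obtain ⟨v, hv⟩ := hQ
  refine card_le_card_of_injOn Prod.fst (fun D _ => mem_univ _) fun D hD D' hD' hcol => ?_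
  obtain ⟨hD, hQD⟩ := mem_filter.1 hD
  obtain ⟨hD', hQD'⟩ := mem_filter.1 hD'
  exact hR.eq_of_mem_of_mem hD hD' hcol (hQD hv) (hQD' hv)

variable [Fintype κ] [Fintype ν] [DecidableEq ν]

lemma IsMatchingFamily.exists_isGrouping_codegreeThreshold_or_card_le
    (hR : IsMatchingFamily q R) (hq : q ≠ 0) {K : ℝ} (hK : 1 ≤ K) (n ρ X : ℝ) :
    (∃ Λ, K ≤ Λ ∧ ∃ t ∈ Icc 1 q, ∃ R' ⊆ R, ∃ (d : ℕ) (𝒢 : _) (P : _),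
      IsGrouping Prod.snd R' d t 𝒢 P ∧
      (∀ Q : Finset ν, Q.Nonempty →
        codegree Prod.snd R' Q ≤ 4 * Λ * codegreeThreshold n ρ #Q) ∧
      Λ * codegreeThreshold n ρ t ≤ d ∧ d ≤ 2 * Λ * codegreeThreshold n ρ t ∧ X ≤ #𝒢 * d) ∨
    #R ≤ (Nat.log 2 (Fintype.card κ) + 1 : ℕ) * (q * X)
      + Fintype.card ν * (2 * K * codegreeThreshold n ρ 1) := by
  set dw : ℕ → ℕ := fun w => ⌈K * codegreeThreshold n ρ w⌉₊
  have hKthr : ∀ w, 1 ≤ K * codegreeThreshold n ρ w := fun w =>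
    one_le_mul_of_one_le_of_one_le hK (one_le_codegreeThreshold n ρ w)
  have hle_dw : ∀ w, K * codegreeThreshold n ρ w ≤ dw w := fun w => Nat.le_ceil _
  have hdw_le : ∀ w, dw w ≤ 2 * K * codegreeThreshold n ρ w := fun w => by
    rw [mul_assoc]
    exact Nat.ceil_le_two_mul (by linarith [hKthr w])
  have hdw : ∀ w, dw w ≠ 0 := fun w => (Nat.ceil_pos.2 (zero_lt_one.trans_le (hKthr w))).ne'
  have hdeg : ∀ Q : Finset ν, Q.Nonempty →
      codegree Prod.snd R Q < 2 ^ (Nat.log 2 (Fintype.card κ) + 1) * dw #Q := fun Q hQ =>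
    ((hR.codegree_le hQ).trans_lt (Nat.lt_pow_succ_log_self one_lt_two _)).trans_le
      (Nat.le_mul_of_pos_right _ (hdw _).bot_lt)
  refine (exists_isGrouping_or_card_le hq hdw X _ hR.card_eq hdeg).imp ?_ fun hcard =>
    hcard.trans (by gcongr; exact hdw_le 1)
  rintro ⟨a, t, ht, R', hR', 𝒢, P, h𝒢, hdeg', hX⟩
  refine ⟨2 ^ a * K, le_mul_of_one_le_left (by linarith) (one_le_pow₀ one_le_two), t, ht, R', hR',
    _, 𝒢, P, h𝒢, fun Q hQ => ?_, ?_, ?_, hX⟩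
  · calc (codegree Prod.snd R' Q : ℝ) ≤ 2 ^ (a + 1) * dw #Q := mod_cast (hdeg' Q hQ).le
      _ ≤ 2 ^ (a + 1) * (2 * K * codegreeThreshold n ρ #Q) := by gcongr; exact hdw_le _
      _ = _ := by ring
  · push_cast
    rw [mul_assoc]
    gcongr
    exact hle_dw t
  · push_cast
    calc (2 ^ a * dw t : ℝ) ≤ 2 ^ a * (2 * K * codegreeThreshold n ρ t) := by
          gcongr
          exact hdw_le t
      _ = _ := by ring

variable [DecidableEq κ] [Nonempty ν] {d t : ℕ} {𝒢 : Finset (Finset (κ × Finset ν))}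
  {P : Finset (κ × Finset ν) → Finset ν} {E : (κ → ℤˣ) → ν → ℤˣ} {Λ ρ ε : ℝ}

/-- The constant of the bound that a grouping provides. -/
noncomputable def groupingConst (q : ℕ) : ℝ := 128 ^ 2 * Real.exp 1 ^ 3 * 16 ^ q * q

omit [Fintype κ] [DecidableEq ν] [DecidableEq κ] in
lemma exists_card_pi_le_exp_pow {α β : Type*} [Fintype α] [DecidableEq α] [Fintype β]
    [DecidableEq β] (hα : Fintype.card α ≤ q)
    (hlog : 1 / 2 ≤ Fintype.card β * q * Real.log (Fintype.card ν)) :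
    ∃ m : ℕ, m ≠ 0 ∧ (Fintype.card (α → β → ν) : ℝ) ≤ Real.exp 1 ^ (2 * m) ∧
      m ≤ 2 * (Fintype.card β * q * Real.log (Fintype.card ν)) := by
  have : (0 : ℝ) < Fintype.card ν := Nat.cast_pos.2 Fintype.card_pos
  set x := Fintype.card β * q * Real.log (Fintype.card ν) with hx
  refine ⟨⌈x⌉₊, (Nat.ceil_pos.2 (by linarith)).ne', ?_, Nat.ceil_le_two_mul (by linarith)⟩
  rw [Fintype.card_fun, Fintype.card_fun, ← pow_mul, Nat.cast_pow, ← Real.exp_nat_mul, mul_one,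
    ← Real.log_le_iff_le_exp (by positivity), Real.log_pow]
  calc (Fintype.card β * Fintype.card α : ℕ) * Real.log (Fintype.card ν) ≤ x := by
        rw [hx]
        push_cast
        gcongr
    _ ≤ ⌈x⌉₊ := Nat.le_ceil x
    _ ≤ (2 * ⌈x⌉₊ : ℕ) := mod_cast Nat.le_mul_of_pos_left _ two_pos

lemma sq_sq_mul_card_mul_le (hR : IsMatchingFamily q R)
    (h𝒢 : IsGrouping Prod.snd R d t 𝒢 P) (ht : t ∈ Icc 1 q)
    (hadv : ∀ D ∈ R, 2 * ε ≤ 𝔼 b, clauseValue E D b) (hε : 0 ≤ ε)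
    (hn : 2 ≤ Fintype.card ν) (hρ : 0 < ρ) (hρ1 : ρ ≤ 1)
    (hnρ : (Fintype.card ν : ℝ) ^ 2 * ρ ^ q = 1) (hnρ1 : 1 ≤ Fintype.card ν * ρ)
    (hΛ : 1 ≤ ε ^ 2 * Λ)
    (hdeg : ∀ Q : Finset ν, Q.Nonempty →
      codegree Prod.snd R Q ≤ 4 * Λ * codegreeThreshold (Fintype.card ν) ρ #Q)
    (hd : Λ * codegreeThreshold (Fintype.card ν) ρ t ≤ d)
    (hd' : d ≤ 2 * Λ * codegreeThreshold (Fintype.card ν) ρ t) :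
    (ε ^ 2 * (#𝒢 * d)) ^ 2 ≤ groupingConst q * Fintype.card ν ^ 2 * (Fintype.card ν * ρ) *
      Real.log (Fintype.card ν) * Fintype.card κ := by
  obtain ⟨ht1, htq⟩ := mem_Icc.1 ht
  have hlog := one_half_le_log_natCast hn
  set n := (Fintype.card ν : ℝ)
  have hn0 : 0 < n := Nat.cast_pos.2 Fintype.card_pos
  set l := ⌈n * ρ⌉₊
  have hl : l ≠ 0 := (Nat.ceil_pos.2 (by linarith)).ne'
  have hl_le : l ≤ 2 * (n * ρ) := Nat.ceil_le_two_mul (by linarith)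
  have : NeZero l := ⟨hl⟩
  obtain ⟨m, hm, hcard, hm_le⟩ := exists_card_pi_le_exp_pow (α := Fin (q - t)) (β := Fin l)
    (ν := ν) (q := q) (by simp) (by
      have hlq : (1 : ℝ) ≤ l * q := mod_cast Nat.mul_pos hl.bot_lt (ht1.trans htq)
      rw [Fintype.card_fin]
      exact hlog.trans (le_mul_of_one_le_left (by linarith) hlq))
  have hcore := three_mul_sq_mul_card_mul_le (α := Fin (q - t)) (β := Fin l) hR h𝒢
    (by rw [Fintype.card_fin]; omega) (by omega) hadv hε hρ hρ1 hnρ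
    (by rw [Fintype.card_fin, le_div_iff₀' hn0]; exact Nat.le_ceil _)
    (by rw [Fintype.card_fin, div_le_iff₀' hn0]; linarith) hΛ hdeg hd hd' hm hcard
  rw [Fintype.card_fin] at hm_le hcore
  calc (ε ^ 2 * (#𝒢 * d)) ^ 2 = (3 * ε ^ 2 * (#𝒢 * d)) ^ 2 / 9 := by ring
    _ ≤ (128 * Real.exp 1 * 4 ^ q * n * √(Real.exp 1 * (2 * (2 * (2 * (n * ρ) * q * Real.log n)))
          * Fintype.card κ)) ^ 2 / 9 := by
      gcongr ?_ ^ 2 / 9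
      refine hcore.trans ?_
      gcongr
      · norm_num
      · exact Nat.sub_le q t
      · exact hm_le.trans (by gcongr)
    _ = 8 / 9 * (groupingConst q * n ^ 2 * (n * ρ) * Real.log n * Fintype.card κ) := by
      rw [mul_pow, Real.sq_sqrt (by positivity), groupingConst,
        show (16 : ℝ) = 4 ^ 2 by norm_num, ← pow_mul]
      ring
    _ ≤ 1 * (groupingConst q * n ^ 2 * (n * ρ) * Real.log n * Fintype.card κ) := by
      unfold groupingConst
      gcongr
      norm_num
    _ = _ := one_mul _

end Grouping

lemma mul_le_of_sq_mul_div_le {k n b x δ B : ℝ} (hk : 0 ≤ k) (hn : 0 < n) (hb : 0 < b)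
    (hB : 0 ≤ B) (h : (x * (k * δ * n / b)) ^ 2 ≤ B * n ^ 2 * k) :
    k * (x ^ 2 * δ ^ 2) ≤ b ^ 2 * B := by
  obtain rfl | hk := hk.eq_or_lt
  · rw [zero_mul]
    positivity
  refine le_of_mul_le_mul_right ?_ (by positivity : 0 < k * n ^ 2 / b ^ 2)
  calc _ = (x * (k * δ * n / b)) ^ 2 := by
        field_simp
    _ ≤ B * n ^ 2 * k := h
    _ = _ := by
        field_simp

section NormallyDecodable

variable {κ ν : Type*} [Fintype κ] [DecidableEq κ] [Fintype ν] [DecidableEq ν] {q : ℕ} {δ ε : ℝ}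
  {E : (κ → ℤˣ) → ν → ℤˣ} {H : κ → Finset (Finset ν)}

/-- The code `E` is `(q, δ, ε)`-normally decodable by means of the `q`-uniform matchings `H i`. -/
structure IsNormallyDecodable (q : ℕ) (δ ε : ℝ) (E : (κ → ℤˣ) → ν → ℤˣ)
    (H : κ → Finset (Finset ν)) : Prop where
  card_eq : ∀ i, ∀ C ∈ H i, #C = q
  disjoint : ∀ i, ∀ C ∈ H i, ∀ C' ∈ H i, C ≠ C' → Disjoint C C'
  le_card : ∀ i, δ * Fintype.card ν ≤ #(H i)
  le_prob : ∀ i, ∀ C ∈ H i,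
    1 / 2 + ε ≤ (#{b : κ → ℤˣ | b i = ∏ v ∈ C, E b v} : ℝ) / 2 ^ Fintype.card κ

/-- The clauses `(i, C)` with `C ∈ H i`. -/
def clauses (H : κ → Finset (Finset ν)) : Finset (κ × Finset ν) := {D | D.2 ∈ H D.1}

omit [DecidableEq κ] in
lemma mem_clauses {D : κ × Finset ν} : D ∈ clauses H ↔ D.2 ∈ H D.1 := mem_filter_univ D

omit [DecidableEq κ] in
lemma card_clauses (H : κ → Finset (Finset ν)) : #(clauses H) = ∑ i, #(H i) := by
  rw [clauses, card_filter, Fintype.sum_prod_type]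
  exact sum_congr rfl fun i _ => by simp

namespace IsNormallyDecodable

lemma isMatchingFamily (h : IsNormallyDecodable q δ ε E H) :
    IsMatchingFamily q (clauses H) where
  card_eq D hD := h.card_eq D.1 D.2 (mem_clauses.1 hD)
  disjoint D hD D' hD' hcol hne := h.disjoint D.1 D.2 (mem_clauses.1 hD) D'.2
    (hcol ▸ mem_clauses.1 hD') fun heq => hne (Prod.ext hcol heq)

lemma two_mul_le_expect (h : IsNormallyDecodable q δ ε E H) {D : κ × Finset ν}
    (hD : D ∈ clauses H) : 2 * ε ≤ 𝔼 b, clauseValue E D b :=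
  two_mul_le_expect_clauseValue (h.le_prob D.1 D.2 (mem_clauses.1 hD))

lemma card_mul_le_card_clauses (h : IsNormallyDecodable q δ ε E H) :
    Fintype.card κ * (δ * Fintype.card ν) ≤ #(clauses H) := by
  rw [card_clauses, Nat.cast_sum, ← nsmul_eq_mul, ← card_univ]
  exact card_nsmul_le_sum _ _ _ fun i _ => h.le_card i

variable [Nonempty ν]

omit [DecidableEq ν] in
lemma card_le_three_mul (h : IsNormallyDecodable q δ ε E H) (hδ : 0 < δ) (hε : 0 < ε) :
    (Fintype.card κ : ℝ) ≤ 3 * Fintype.card ν * ε⁻¹ ^ 2 := by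
  have hH : ∀ i, (H i).Nonempty := fun i => by
    have hcard : (0 : ℝ) < #(H i) := (by positivity : 0 < δ * Fintype.card ν).trans_le (h.le_card i)
    exact card_pos.1 (mod_cast hcard)
  classical
  choose C hC using hH
  exact card_le_of_forall_le_expect_clauseValue hε C fun i =>
    h.two_mul_le_expect (mem_clauses.2 (hC i))

omit [DecidableEq ν] in
lemma card_le_or_card_mul_le (h : IsNormallyDecodable q δ ε E H) (hq : q ≠ 0)
    (hδ : 0 < δ) (hε : 0 < ε) (hε1 : ε ≤ 1) (hn : 2 ≤ Fintype.card ν) {ρ : ℝ} (hρ : 0 < ρ)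
    (hρ1 : ρ ≤ 1) (hnρ : (Fintype.card ν : ℝ) ^ 2 * ρ ^ q = 1) (hnρ1 : 1 ≤ Fintype.card ν * ρ) :
    Fintype.card κ ≤ 4 * (Fintype.card ν * ρ) * ε⁻¹ ^ 2 * δ⁻¹ ∨
      Fintype.card κ * (ε ^ 4 * δ ^ 2) ≤
        4 * q ^ 2 * (Nat.log 2 (Fintype.card κ) + 1 : ℕ) ^ 2 * groupingConst q *
          (Fintype.card ν * ρ) * Real.log (Fintype.card ν) := by
  classical
  set n := (Fintype.card ν : ℝ)
  set k := (Fintype.card κ : ℝ)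
  set a := ((Nat.log 2 (Fintype.card κ) + 1 : ℕ) : ℝ)
  have ha : 0 < a := Nat.cast_pos.2 (Nat.succ_pos _)
  have hn0 : 0 < n := Nat.cast_pos.2 Fintype.card_pos
  set X := k * δ * n / (2 * q * a)
  obtain ⟨Λ, hΛ, t, ht, R, hR, d, 𝒢, P, h𝒢, hdeg, hd, hd', hX⟩ | hcard :=
    h.isMatchingFamily.exists_isGrouping_codegreeThreshold_or_card_le hq (K := ε⁻¹ ^ 2)
      (one_le_pow₀ ((one_le_inv₀ hε).2 hε1)) n ρ X
  · right
    have hgroup := sq_sq_mul_card_mul_le (h.isMatchingFamily.mono hR) h𝒢 ht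
      (fun D hD => h.two_mul_le_expect (hR hD)) hε.le hn hρ hρ1 hnρ hnρ1 (by
        calc 1 = ε ^ 2 * ε⁻¹ ^ 2 := by field_simp
          _ ≤ ε ^ 2 * Λ := by gcongr) hdeg hd hd'
    have hlog := one_half_le_log_natCast hn
    have hbound := mul_le_of_sq_mul_div_le (k := k) (n := n) (b := 2 * q * a) (x := ε ^ 2)
      (δ := δ) (B := groupingConst q * (n * ρ) * Real.log n) (Nat.cast_nonneg _) hn0
      (by positivity) (by unfold groupingConst; positivity) (by
        calc (ε ^ 2 * X) ^ 2 ≤ (ε ^ 2 * (#𝒢 * d)) ^ 2 := by gcongr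
          _ ≤ _ := hgroup
          _ = _ := by ring)
    linarith
  · left
    have hthr : codegreeThreshold n ρ 1 = n * ρ := by
      rw [codegreeThreshold, pow_one, max_eq_right hnρ1]
    rw [hthr] at hcard
    have hX : a * (q * X) = k * (δ * n) / 2 := by
      simp only [X]
      field_simp
    rw [← div_eq_mul_inv, le_div_iff₀ hδ]
    refine le_of_mul_le_mul_right ?_ hn0
    linarith [h.card_mul_le_card_clauses]

end IsNormallyDecodable

end NormallyDecodable

/-- The constant of the bound on the length of a normally decodable code. -/
noncomputable def decodingConst (q : ℕ) : ℝ := 256 * q ^ 2 * groupingConst q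

lemma hundred_le_decodingConst {q : ℕ} (hq : q ≠ 0) : 100 ≤ decodingConst q := by
  have hq1 : (1 : ℝ) ≤ q := mod_cast Nat.one_le_iff_ne_zero.2 hq
  unfold decodingConst groupingConst
  calc (100 : ℝ) ≤ 256 * 1 ^ 2 * (128 ^ 2 * 1 ^ 3 * 1 * 1) := by norm_num
    _ ≤ _ := by
      gcongr
      · exact Real.one_le_exp zero_le_one
      · exact one_le_pow₀ (by norm_num)

section MainBound

variable {κ ν : Type*} [Fintype κ] [DecidableEq κ] [Fintype ν] {q : ℕ} {δ ε : ℝ}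
  {E : (κ → ℤˣ) → ν → ℤˣ} {H : κ → Finset (Finset ν)}

lemma le_decodingConst_mul_of_le_eight_mul {n : ℕ} (hn : 2 ≤ n) (hq : q ≠ 0) {x y : ℝ}
    (hy : 0 ≤ y) (hx : x ≤ 8 * y) : x ≤ decodingConst q * Real.log n ^ 3 * y := by
  refine hx.trans (mul_le_mul_of_nonneg_right ?_ hy)
  calc (8 : ℝ) ≤ 100 * (1 / 2) ^ 3 := by norm_num
    _ ≤ _ := mul_le_mul (hundred_le_decodingConst hq)
      (pow_le_pow_left₀ (by norm_num) (one_half_le_log_natCast hn) 3) (by norm_num)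
      ((by norm_num : (0 : ℝ) ≤ 100).trans (hundred_le_decodingConst hq))

variable [Nonempty ν]

lemma IsNormallyDecodable.natLog_card_add_one_le (h : IsNormallyDecodable q δ ε E H) (hδ : 0 < δ)
    (hε : 0 < ε) (hn : 2 ≤ Fintype.card ν) (hεn : ε⁻¹ ^ 2 ≤ Fintype.card ν) :
    (Nat.log 2 (Fintype.card κ) + 1 : ℕ) ≤ 8 * Real.log (Fintype.card ν) := by
  refine natLog_add_one_le_mul_log hn (Nat.cast_le (α := ℝ).1 ?_)
  push_cast
  set n := (Fintype.card ν : ℝ)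
  have hn2 : (2 : ℝ) ≤ n := Nat.ofNat_le_cast.2 hn
  calc (Fintype.card κ : ℝ) ≤ 3 * n * n := (h.card_le_three_mul hδ hε).trans (by gcongr)
    _ ≤ (2 * 2) * n * n := by gcongr; norm_num
    _ ≤ (n * n) * n * n := by gcongr
    _ = n ^ 4 := by ring

lemma IsNormallyDecodable.card_le_of_sq_mul_pow_eq_one (h : IsNormallyDecodable q δ ε E H)
    (hq : q ≠ 0) (hδ : 0 < δ) (hδ1 : δ ≤ 1) (hε : 0 < ε) (hε1 : ε ≤ 1)
    (hn : 2 ≤ Fintype.card ν) {ρ : ℝ} (hρ : 0 < ρ) (hρ1 : ρ ≤ 1)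
    (hnρ : (Fintype.card ν : ℝ) ^ 2 * ρ ^ q = 1) (hnρ1 : 1 ≤ Fintype.card ν * ρ) :
    Fintype.card κ ≤ decodingConst q * Real.log (Fintype.card ν) ^ 3 *
      (Fintype.card ν * ρ * ε⁻¹ ^ 4 * δ⁻¹ ^ 2) := by
  have hεinv : 1 ≤ ε⁻¹ := (one_le_inv₀ hε).2 hε1
  have hδinv : 1 ≤ δ⁻¹ := (one_le_inv₀ hδ).2 hδ1
  have hlog := one_half_le_log_natCast hn
  by_cases hεn : Fintype.card ν ≤ Fintype.card ν * ρ * ε⁻¹ ^ 2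
  · refine le_decodingConst_mul_of_le_eight_mul hn hq (by positivity) ?_
    calc (Fintype.card κ : ℝ) ≤ 3 * Fintype.card ν * ε⁻¹ ^ 2 := h.card_le_three_mul hδ hε
      _ ≤ 3 * (Fintype.card ν * ρ * ε⁻¹ ^ 2) * ε⁻¹ ^ 2 := by gcongr
      _ = 3 * (Fintype.card ν * ρ * ε⁻¹ ^ 4 * 1 ^ 2) := by ring
      _ ≤ 8 * (Fintype.card ν * ρ * ε⁻¹ ^ 4 * δ⁻¹ ^ 2) := by gcongr; norm_num
  obtain hk | hk := h.card_le_or_card_mul_le hq hδ hε hε1 hn hρ hρ1 hnρ hnρ1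
  · refine le_decodingConst_mul_of_le_eight_mul hn hq (by positivity) (hk.trans ?_)
    rw [mul_assoc 4, mul_assoc 4]
    gcongr
    · norm_num
    · norm_num
    · exact le_self_pow₀ hδinv two_ne_zero
  · have ha := h.natLog_card_add_one_le hδ hε hn
      ((le_mul_of_one_le_left (by positivity) hnρ1).trans (not_le.1 hεn).le)
    have hC : 0 ≤ groupingConst q := by unfold groupingConst; positivity
    refine le_of_mul_le_mul_right (hk.trans ?_) (by positivity : 0 < ε ^ 4 * δ ^ 2)
    calc _ ≤ 4 * q ^ 2 * (8 * Real.log (Fintype.card ν)) ^ 2 * groupingConst q *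
          (Fintype.card ν * ρ) * Real.log (Fintype.card ν) := by gcongr
      _ = _ := by
        rw [decodingConst]
        field_simp
        ring

omit [Nonempty ν] in
theorem stmt0_general (hq : 2 ≤ q) (hn : 2 ≤ Fintype.card ν) (hδ : 0 < δ) (hδ1 : δ ≤ 1)
    (hε : 0 < ε) (hε1 : ε ≤ 1) (h : IsNormallyDecodable q δ ε E H) :
    (Fintype.card κ : ℝ) ≤ decodingConst q * (Fintype.card ν : ℝ) ^ (1 - 2 / q : ℝ) *
      Real.log (Fintype.card ν) ^ 3 * ε⁻¹ ^ 4 * δ⁻¹ ^ 2 := by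
  have hq0 : q ≠ 0 := by omega
  have : Nonempty ν := Fintype.card_pos_iff.1 (by omega)
  have hn1 : (1 : ℝ) ≤ Fintype.card ν := Nat.one_le_cast.2 Fintype.card_pos
  have hn0 : (0 : ℝ) < Fintype.card ν := zero_lt_one.trans_le hn1
  have hexp : (2 / q : ℝ) ≤ 1 := div_le_one_of_le₀ (mod_cast hq) (Nat.cast_nonneg q)
  have hrate : (Fintype.card ν : ℝ) ^ (1 - 2 / q : ℝ)
      = Fintype.card ν * (Fintype.card ν : ℝ) ^ (-(2 / q : ℝ)) := by
    rw [sub_eq_add_neg, Real.rpow_add hn0, Real.rpow_one]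
  have hbound := h.card_le_of_sq_mul_pow_eq_one hq0 hδ hδ1 hε hε1 hn (by positivity)
    (Real.rpow_le_one_of_one_le_of_nonpos hn1 (neg_nonpos.2 (by positivity)))
    (sq_mul_rpow_neg_two_div_pow hn0 hq0)
    (hrate ▸ Real.one_le_rpow hn1 (sub_nonneg.2 hexp))
  rw [← hrate] at hbound
  linarith

end MainBound

/-- For every odd `q ≥ 3` there is a constant `A > 0` (depending only
on `q`) such that for every `n ≥ 2`, `δ, ε ∈ (0,1)`, and every `(q,δ,ε)`-normally
decodable code `E : {±1}^k → {±1}^n`, we have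
`k ≤ A · n^{1−2/q} · (log n)⁴ · ε⁻⁴ · δ⁻²`.
A code is `(q,δ,ε)`-normally decodable if there are `q`-uniform hypergraph
matchings `H 1, …, H k` on `[n]`, each with at least `δn` hyperedges, such that
for every `i` and `C ∈ H i`, `Pr_b[b i = ∏_{v ∈ C} E(b) v] ≥ 1/2 + ε` where `b`
is uniform on `{±1}^k`. -/
theorem stmt0 :
    ∀ q : ℕ, Odd q → 3 ≤ q →
    ∃ A : ℝ, 0 < A ∧
      ∀ (n k : ℕ) (δ ε : ℝ), 2 ≤ n → 0 < δ → δ < 1 → 0 < ε → ε < 1 →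
      ∀ (E : (Fin k → ℤˣ) → (Fin n → ℤˣ)) (H : Fin k → Finset (Finset (Fin n))),
        (∀ i, ∀ C ∈ H i, C.card = q) →
        (∀ i, ∀ C ∈ H i, ∀ C' ∈ H i, C ≠ C' → Disjoint C C') →
        (∀ i, δ * (n : ℝ) ≤ ((H i).card : ℝ)) →
        (∀ i, ∀ C ∈ H i,
          (1 : ℝ) / 2 + ε ≤
            ((Finset.univ.filter
                (fun b : Fin k → ℤˣ => b i = ∏ v ∈ C, E b v)).card : ℝ) / 2 ^ k) →
        (k : ℝ) ≤ A * (n : ℝ) ^ ((1 : ℝ) - 2 / (q : ℝ)) * Real.log n ^ 4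
            * ε⁻¹ ^ 4 * δ⁻¹ ^ 2 := by
  intro q _ hq
  have hA : 0 < decodingConst q := by linarith [hundred_le_decodingConst (q := q) (by omega)]
  refine ⟨2 * decodingConst q, by positivity, fun n k δ ε hn hδ hδ1 hε hε1 E H hcard hdisj hle
    hprob => ?_⟩
  have h : IsNormallyDecodable q δ ε E H :=
    ⟨hcard, hdisj, by simpa using hle, by simpa using hprob⟩
  have hbound := stmt0_general (by omega) (by simpa using hn) hδ hδ1.le hε hε1.le h
  rw [Fintype.card_fin, Fintype.card_fin] at hbound
  have hlog : Real.log n ^ 3 ≤ 2 * Real.log n ^ 4 := by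
    nlinarith [one_half_le_log_natCast hn, pow_nonneg (Real.log_natCast_nonneg n) 3]
  calc (k : ℝ) ≤ _ := hbound
    _ ≤ decodingConst q * n ^ (1 - 2 / q : ℝ) * (2 * Real.log n ^ 4) * ε⁻¹ ^ 4 * δ⁻¹ ^ 2 := by
      gcongr
    _ = _ := by ring
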